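/- arXiv:0906.1924 — 2 statements merged into one kernel-verified Lean document; each statement's English description precedes it below -/
import Mathlib

section
/- For every integer k ≥ 0 and every l ∈ {0, 1, 2, 3}, the K-vector space Ext^{4k+l}_A(S₁, S₁) has dimension 2k+1 if l ∈ {0, 1, 2}, and dimension 2k+2 if l = 3. -/
/-!
Formalization of a statement from "On the Hochschild cohomology of tame Hecke algebras"
by K. Erdmann and S. Schroll.

`HA K` is the special biserial algebra `A = KQ/I` (the basic algebra of the Hecke algebra
`H_q(S_4)` at `q = -1`), presented by generators `e₁, e₂, ε, α, β` and the relations listed in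
`HRel`.
-/

set_option synthInstance.maxHeartbeats 1000000
set_option maxHeartbeats 1000000

open scoped TensorProduct

/-- The generators `e₁, e₂, ε, α, β` of the algebra `A`. -/
inductive HGen | e1 | e2 | eps | al | be

variable (K : Type) [Field K]

open FreeAlgebra in
/-- The defining relations of `A`:  `e₁² = e₁`, `e₂² = e₂`, `e₁e₂ = e₂e₁ = 0`, `e₁ + e₂ = 1`,
`e₁ε = εe₁ = ε`, `e₁α = α = αe₂`, `e₂β = β = βe₁`, `εα = 0`, `βε = 0`, `(αβ)² = ε²`. -/
inductive HRel : FreeAlgebra K HGen → FreeAlgebra K HGen → Prop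
  | e1e1 : HRel (ι K HGen.e1 * ι K HGen.e1) (ι K HGen.e1)
  | e2e2 : HRel (ι K HGen.e2 * ι K HGen.e2) (ι K HGen.e2)
  | e1e2 : HRel (ι K HGen.e1 * ι K HGen.e2) 0
  | e2e1 : HRel (ι K HGen.e2 * ι K HGen.e1) 0
  | sum  : HRel (ι K HGen.e1 + ι K HGen.e2) 1
  | e1eps : HRel (ι K HGen.e1 * ι K HGen.eps) (ι K HGen.eps)
  | epse1 : HRel (ι K HGen.eps * ι K HGen.e1) (ι K HGen.eps)
  | e1al : HRel (ι K HGen.e1 * ι K HGen.al) (ι K HGen.al)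
  | ale2 : HRel (ι K HGen.al * ι K HGen.e2) (ι K HGen.al)
  | e2be : HRel (ι K HGen.e2 * ι K HGen.be) (ι K HGen.be)
  | bee1 : HRel (ι K HGen.be * ι K HGen.e1) (ι K HGen.be)
  | epsal : HRel (ι K HGen.eps * ι K HGen.al) 0
  | beeps : HRel (ι K HGen.be * ι K HGen.eps) 0
  | abab : HRel (ι K HGen.al * ι K HGen.be * (ι K HGen.al * ι K HGen.be))
      (ι K HGen.eps * ι K HGen.eps)

/-- The algebra `A`. -/
abbrev HA := RingQuot (HRel K)

/-- The image of `e₁` in `A`. -/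
def gE1 : HA K := RingQuot.mkAlgHom K (HRel K) (FreeAlgebra.ι K HGen.e1)
/-- The image of `e₂` in `A`. -/
def gE2 : HA K := RingQuot.mkAlgHom K (HRel K) (FreeAlgebra.ι K HGen.e2)
/-- The image of `ε` in `A`. -/
def gEps : HA K := RingQuot.mkAlgHom K (HRel K) (FreeAlgebra.ι K HGen.eps)
/-- The image of `α` in `A`. -/
def gAl : HA K := RingQuot.mkAlgHom K (HRel K) (FreeAlgebra.ι K HGen.al)
/-- The image of `β` in `A`. -/
def gBe : HA K := RingQuot.mkAlgHom K (HRel K) (FreeAlgebra.ι K HGen.be)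

/-- The algebra map `A →ₐ[K] K` defining the one-dimensional representation at vertex 1
(`e₁` acts by `1`; `e₂, ε, α, β` act by `0`). -/
def phi1 : HA K →ₐ[K] K :=
  RingQuot.liftAlgHom K ⟨FreeAlgebra.lift K (fun g => match g with
    | HGen.e1 => (1 : K) | _ => 0), by
      rintro x y h
      induction h <;> simp⟩

/-- The algebra map `A →ₐ[K] K` defining the one-dimensional representation at vertex 2. -/
def phi2 : HA K →ₐ[K] K :=
  RingQuot.liftAlgHom K ⟨FreeAlgebra.lift K (fun g => match g with
    | HGen.e2 => (1 : K) | _ => 0), by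
      rintro x y h
      induction h <;> simp⟩

/-- The simple right `A`-module `S_{i+1}` (one-dimensional, `e_{i+1}` acts as the identity,
the other generators act by zero); `SMod K 0 = S₁` and `SMod K 1 = S₂`.
Right `A`-modules are modules over `Aᵐᵒᵖ`. -/
def SMod (_i : Fin 2) : Type := K

instance (i : Fin 2) : AddCommGroup (SMod K i) := inferInstanceAs (AddCommGroup K)

instance (i : Fin 2) : Module (HA K)ᵐᵒᵖ (SMod K i) :=
  Module.compHom K
    (((if i = 0 then phi1 K else phi2 K) : HA K →ₐ[K] K).toRingHom.fromOpposite
      (fun _ _ => mul_comm _ _))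

open CategoryTheory in
/-- `dim_K Ext^n_A(S_{i+1}, S_{j+1})`, computed in the category of right `A`-modules,
which is a `K`-linear abelian category with enough projectives. -/
noncomputable def extDim (i j : Fin 2) (n : ℕ) : ℕ :=
  Module.finrank K
    (((Ext K (ModuleCat (HA K)ᵐᵒᵖ) n).obj
      (Opposite.op (ModuleCat.of (HA K)ᵐᵒᵖ (SMod K i)))).obj
      (ModuleCat.of (HA K)ᵐᵒᵖ (SMod K j)))

section Aux

open MulOpposite

set_option linter.unusedSimpArgs false

/-- The image of a generator in `A`. -/
def gen (g : HGen) : HA K := RingQuot.mkAlgHom K (HRel K) (FreeAlgebra.ι K g)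

theorem HA_induction {p : HA K → Prop} (hK : ∀ c : K, p (algebraMap K (HA K) c))
    (hg : ∀ g, p (gen K g)) (hadd : ∀ a b, p a → p b → p (a + b))
    (hmul : ∀ a b, p a → p b → p (a * b)) (a : HA K) : p a := by
  obtain ⟨x, rfl⟩ := RingQuot.mkAlgHom_surjective K (HRel K) a
  induction x using FreeAlgebra.induction with
  | grade0 r => simpa using hK r
  | grade1 x => exact hg x
  | mul a b ha hb => simpa using hmul _ _ ha hb
  | add a b ha hb => simpa using hadd _ _ ha hb

theorem linear_of_gens {M M' : Type} [AddCommGroup M] [AddCommGroup M'] [Module (HA K)ᵐᵒᵖ M]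
    [Module (HA K)ᵐᵒᵖ M'] (f : M →+ M')
    (hK : ∀ (c : K) m, f (op (algebraMap K (HA K) c) • m) = op (algebraMap K (HA K) c) • f m)
    (hg : ∀ g m, f (op (gen K g) • m) = op (gen K g) • f m) (b : (HA K)ᵐᵒᵖ) (m : M) :
    f (b • m) = b • f m := by
  obtain ⟨a, rfl⟩ := op_surjective b
  induction a using HA_induction K generalizing m with
  | hK c => exact hK c m
  | hg g => exact hg g m
  | hadd a b ha hb => simp [add_smul, ha, hb]
  | hmul a b ha hb => simp [mul_smul, ha, hb]

section Rep

variable {K}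
variable {V W : Type} [AddCommGroup V] [Module K V] [AddCommGroup W] [Module K W]

/-- Right module structure from action of generators. -/
noncomputable def repHom (a : HGen → Module.End K V)
    (h : ∀ ⦃x y⦄, HRel K x y → FreeAlgebra.lift K (fun g => op (a g)) x =
      FreeAlgebra.lift K (fun g => op (a g)) y) : (HA K)ᵐᵒᵖ →ₐ[K] Module.End K V :=
  AlgHom.opComm (RingQuot.liftAlgHom K ⟨FreeAlgebra.lift K (fun g => op (a g)), h⟩)

theorem repHom_gen (a : HGen → Module.End K V) (h) (g : HGen) :
    repHom a h (op (gen K g)) = a g := by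
  simp [repHom, gen, AlgHom.opComm]

/-- Module attached to a representation. -/
def RMod (_ρ : (HA K)ᵐᵒᵖ →ₐ[K] Module.End K V) : Type := V

instance (ρ : (HA K)ᵐᵒᵖ →ₐ[K] Module.End K V) : AddCommGroup (RMod ρ) :=
  inferInstanceAs (AddCommGroup V)

instance (ρ : (HA K)ᵐᵒᵖ →ₐ[K] Module.End K V) : Module (HA K)ᵐᵒᵖ (RMod ρ) :=
  Module.compHom V ρ.toRingHom

theorem RMod_smul (ρ : (HA K)ᵐᵒᵖ →ₐ[K] Module.End K V) (b : (HA K)ᵐᵒᵖ) (v : V) :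
    (b • (show RMod ρ from v) : RMod ρ) = ρ b v := rfl

theorem RMod_smul' (ρ : (HA K)ᵐᵒᵖ →ₐ[K] Module.End K V) (b : (HA K)ᵐᵒᵖ) (v : RMod ρ) :
    (b • v : RMod ρ) = ρ b v := rfl

theorem RMod_smul_K (ρ : (HA K)ᵐᵒᵖ →ₐ[K] Module.End K V) (c : K) (v : RMod ρ) :
    (op (algebraMap K (HA K) c) • v : RMod ρ) = (c • (show V from v) : V) := by
  rw [RMod_smul']
  change ρ (algebraMap K (HA K)ᵐᵒᵖ c) v = _
  rw [AlgHom.commutes]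
  rfl

/-- Build an `A`-linear map. -/
def mkHom (ρ : (HA K)ᵐᵒᵖ →ₐ[K] Module.End K V) (ρ' : (HA K)ᵐᵒᵖ →ₐ[K] Module.End K W)
    (f : V →ₗ[K] W) (h : ∀ g v, f (ρ (op (gen K g)) v) = ρ' (op (gen K g)) (f v)) :
    RMod ρ →ₗ[(HA K)ᵐᵒᵖ] RMod ρ' where
  toFun v := f v
  map_add' := f.map_add
  map_smul' := by
    intro b v
    exact linear_of_gens K (M := RMod ρ) (M' := RMod ρ') f.toAddMonoidHom
      (fun c m => by
        rw [RMod_smul_K, RMod_smul_K]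
        exact f.map_smul c m) (fun g m => h g m) b v

end Rep

/-- basis: e₁, ε, ε², α, αβ, αβα -/
def act1 : HGen → Module.End K (Fin 6 → K)
  | .e1 => { toFun := fun x => ![x 0, x 1, x 2, 0, x 4, 0]
             map_add' := by intros; ext i; fin_cases i <;> simp
             map_smul' := by intros; ext i; fin_cases i <;> simp }
  | .e2 => { toFun := fun x => ![0, 0, 0, x 3, 0, x 5]
             map_add' := by intros; ext i; fin_cases i <;> simp
             map_smul' := by intros; ext i; fin_cases i <;> simp }
  | .eps => { toFun := fun x => ![0, x 0, x 1, 0, 0, 0]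
              map_add' := by intros; ext i; fin_cases i <;> simp
              map_smul' := by intros; ext i; fin_cases i <;> simp }
  | .al => { toFun := fun x => ![0, 0, 0, x 0, 0, x 4]
             map_add' := by intros; ext i; fin_cases i <;> simp
             map_smul' := by intros; ext i; fin_cases i <;> simp }
  | .be => { toFun := fun x => ![0, 0, x 5, 0, x 3, 0]
             map_add' := by intros; ext i; fin_cases i <;> simp
             map_smul' := by intros; ext i; fin_cases i <;> simp }

/-- basis: e₂, β, βα, βαβ, βαβα -/
def act2 : HGen → Module.End K (Fin 5 → K)
  | .e1 => { toFun := fun x => ![0, x 1, 0, x 3, 0]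
             map_add' := by intros; ext i; fin_cases i <;> simp
             map_smul' := by intros; ext i; fin_cases i <;> simp }
  | .e2 => { toFun := fun x => ![x 0, 0, x 2, 0, x 4]
             map_add' := by intros; ext i; fin_cases i <;> simp
             map_smul' := by intros; ext i; fin_cases i <;> simp }
  | .eps => 0
  | .al => { toFun := fun x => ![0, 0, x 1, 0, x 3]
             map_add' := by intros; ext i; fin_cases i <;> simp
             map_smul' := by intros; ext i; fin_cases i <;> simp }
  | .be => { toFun := fun x => ![0, x 0, 0, x 2, 0]
             map_add' := by intros; ext i; fin_cases i <;> simp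
             map_smul' := by intros; ext i; fin_cases i <;> simp }

theorem act1_e1 (x) : act1 K .e1 x = ![x 0, x 1, x 2, 0, x 4, 0] := rfl
theorem act1_e2 (x) : act1 K .e2 x = ![0, 0, 0, x 3, 0, x 5] := rfl
theorem act1_eps (x) : act1 K .eps x = ![0, x 0, x 1, 0, 0, 0] := rfl
theorem act1_al (x) : act1 K .al x = ![0, 0, 0, x 0, 0, x 4] := rfl
theorem act1_be (x) : act1 K .be x = ![0, 0, x 5, 0, x 3, 0] := rfl
theorem act2_e1 (x) : act2 K .e1 x = ![0, x 1, 0, x 3, 0] := rfl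
theorem act2_e2 (x) : act2 K .e2 x = ![x 0, 0, x 2, 0, x 4] := rfl
theorem act2_eps (x) : act2 K .eps x = 0 := rfl
theorem act2_al (x) : act2 K .al x = ![0, 0, x 1, 0, x 3] := rfl
theorem act2_be (x) : act2 K .be x = ![0, x 0, 0, x 2, 0] := rfl

/-- The representation on `e₁A`. -/
noncomputable def rho1 : (HA K)ᵐᵒᵖ →ₐ[K] Module.End K (Fin 6 → K) :=
  repHom (act1 K) (by
    intro x y h
    apply unop_injective
    refine LinearMap.ext fun v => ?_
    induction h <;>
    · simp only [map_mul, map_add, map_one, map_zero, FreeAlgebra.lift_ι_apply, unop_mul, unop_op,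
        unop_add, unop_one, unop_zero, Module.End.mul_apply, LinearMap.add_apply, Module.End.one_apply,
        LinearMap.zero_apply,
        act1_e1, act1_e2, act1_eps, act1_al, act1_be]
      ext i
      fin_cases i <;> simp)

/-- The representation on `e₂A`. -/
noncomputable def rho2 : (HA K)ᵐᵒᵖ →ₐ[K] Module.End K (Fin 5 → K) :=
  repHom (act2 K) (by
    intro x y h
    apply unop_injective
    refine LinearMap.ext fun v => ?_
    induction h <;>
    · simp only [map_mul, map_add, map_one, map_zero, FreeAlgebra.lift_ι_apply, unop_mul, unop_op,
        unop_add, unop_one, unop_zero, Module.End.mul_apply, LinearMap.add_apply, Module.End.one_apply,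
        LinearMap.zero_apply,
        act2_e1, act2_e2, act2_eps, act2_al, act2_be]
      try (ext i; fin_cases i <;> simp))

theorem rho1_gen (g) : rho1 K (op (gen K g)) = act1 K g := repHom_gen _ _ _
theorem rho2_gen (g) : rho2 K (op (gen K g)) = act2 K g := repHom_gen _ _ _

/-- `α : e₂A → e₁A` -/
noncomputable def lal : RMod (rho2 K) →ₗ[(HA K)ᵐᵒᵖ] RMod (rho1 K) :=
  mkHom _ _ { toFun := fun y => ![0, 0, y 3, y 0, y 1, y 2]
              map_add' := by intros; ext i; fin_cases i <;> simp
              map_smul' := by intros; ext i; fin_cases i <;> simp } (by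
    intro g v
    rw [rho1_gen, rho2_gen]
    cases g <;> simp [act1_e1, act1_e2, act1_eps, act1_al, act1_be, act2_e1, act2_e2, act2_eps, act2_al, act2_be])

/-- `βαβα : e₂A → e₂A` -/
noncomputable def lbaba : RMod (rho2 K) →ₗ[(HA K)ᵐᵒᵖ] RMod (rho2 K) :=
  mkHom _ _ { toFun := fun y => ![0, 0, 0, 0, y 0]
              map_add' := by intros; ext i; fin_cases i <;> simp
              map_smul' := by intros; ext i; fin_cases i <;> simp } (by
    intro g v
    rw [rho2_gen]
    cases g <;> simp [act2_e1, act2_e2, act2_eps, act2_al, act2_be])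

/-- `β : e₁A → e₂A` -/
noncomputable def lbe : RMod (rho1 K) →ₗ[(HA K)ᵐᵒᵖ] RMod (rho2 K) :=
  mkHom _ _ { toFun := fun x => ![0, x 0, x 3, x 4, x 5]
              map_add' := by intros; ext i; fin_cases i <;> simp
              map_smul' := by intros; ext i; fin_cases i <;> simp } (by
    intro g v
    rw [rho1_gen, rho2_gen]
    cases g <;> simp [act1_e1, act1_e2, act1_eps, act1_al, act1_be, act2_e1, act2_e2, act2_eps, act2_al, act2_be])

/-- `ε : e₁A → e₁A` -/
noncomputable def leps : RMod (rho1 K) →ₗ[(HA K)ᵐᵒᵖ] RMod (rho1 K) :=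
  mkHom _ _ { toFun := fun x => ![0, x 0, x 1, 0, 0, 0]
              map_add' := by intros; ext i; fin_cases i <;> simp
              map_smul' := by intros; ext i; fin_cases i <;> simp } (by
    intro g v
    rw [rho1_gen]
    cases g <;> simp [act1_e1, act1_e2, act1_eps, act1_al, act1_be])

/-- `βαβ : e₁A → e₂A` -/
noncomputable def lbab : RMod (rho1 K) →ₗ[(HA K)ᵐᵒᵖ] RMod (rho2 K) :=
  mkHom _ _ { toFun := fun x => ![0, 0, 0, x 0, x 3]
              map_add' := by intros; ext i; fin_cases i <;> simp
              map_smul' := by intros; ext i; fin_cases i <;> simp } (by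
    intro g v
    rw [rho1_gen, rho2_gen]
    cases g <;> simp [act1_e1, act1_e2, act1_eps, act1_al, act1_be, act2_e1, act2_e2, act2_eps, act2_al, act2_be])

/-- `αβα : e₂A → e₁A` -/
noncomputable def laba : RMod (rho2 K) →ₗ[(HA K)ᵐᵒᵖ] RMod (rho1 K) :=
  mkHom _ _ { toFun := fun y => ![0, 0, y 1, 0, 0, y 0]
              map_add' := by intros; ext i; fin_cases i <;> simp
              map_smul' := by intros; ext i; fin_cases i <;> simp } (by
    intro g v
    rw [rho1_gen, rho2_gen]
    cases g <;> simp [act1_e1, act1_e2, act1_eps, act1_al, act1_be, act2_e1, act2_e2, act2_eps, act2_al, act2_be])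

/-- `αβ : e₁A → e₁A` -/
noncomputable def lab : RMod (rho1 K) →ₗ[(HA K)ᵐᵒᵖ] RMod (rho1 K) :=
  mkHom _ _ { toFun := fun x => ![0, 0, x 4, 0, x 0, x 3]
              map_add' := by intros; ext i; fin_cases i <;> simp
              map_smul' := by intros; ext i; fin_cases i <;> simp } (by
    intro g v
    rw [rho1_gen]
    cases g <;> simp [act1_e1, act1_e2, act1_eps, act1_al, act1_be])

theorem lal_apply (y : Fin 5 → K) : lal K y = ![0, 0, y 3, y 0, y 1, y 2] := rfl
theorem lbaba_apply (y : Fin 5 → K) : lbaba K y = ![0, 0, 0, 0, y 0] := rfl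
theorem lbe_apply (x : Fin 6 → K) : lbe K x = ![0, x 0, x 3, x 4, x 5] := rfl
theorem leps_apply (x : Fin 6 → K) : leps K x = ![0, x 0, x 1, 0, 0, 0] := rfl
theorem lbab_apply (x : Fin 6 → K) : lbab K x = ![0, 0, 0, x 0, x 3] := rfl
theorem laba_apply (y : Fin 5 → K) : laba K y = ![0, 0, y 1, 0, 0, y 0] := rfl
theorem lab_apply (x : Fin 6 → K) : lab K x = ![0, 0, x 4, 0, x 0, x 3] := rfl


theorem rel_e1e1 : gen K .e1 * gen K .e1 = gen K .e1 := by
  simpa [gen] using RingQuot.mkAlgHom_rel K (HRel.e1e1 (K := K))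
theorem rel_e2e2 : gen K .e2 * gen K .e2 = gen K .e2 := by
  simpa [gen] using RingQuot.mkAlgHom_rel K (HRel.e2e2 (K := K))
theorem rel_e1e2 : gen K .e1 * gen K .e2 = 0 := by
  simpa [gen] using RingQuot.mkAlgHom_rel K (HRel.e1e2 (K := K))
theorem rel_e2e1 : gen K .e2 * gen K .e1 = 0 := by
  simpa [gen] using RingQuot.mkAlgHom_rel K (HRel.e2e1 (K := K))
theorem rel_e1eps : gen K .e1 * gen K .eps = gen K .eps := by
  simpa [gen] using RingQuot.mkAlgHom_rel K (HRel.e1eps (K := K))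
theorem rel_epse1 : gen K .eps * gen K .e1 = gen K .eps := by
  simpa [gen] using RingQuot.mkAlgHom_rel K (HRel.epse1 (K := K))
theorem rel_e1al : gen K .e1 * gen K .al = gen K .al := by
  simpa [gen] using RingQuot.mkAlgHom_rel K (HRel.e1al (K := K))
theorem rel_ale2 : gen K .al * gen K .e2 = gen K .al := by
  simpa [gen] using RingQuot.mkAlgHom_rel K (HRel.ale2 (K := K))
theorem rel_e2be : gen K .e2 * gen K .be = gen K .be := by
  simpa [gen] using RingQuot.mkAlgHom_rel K (HRel.e2be (K := K))
theorem rel_bee1 : gen K .be * gen K .e1 = gen K .be := by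
  simpa [gen] using RingQuot.mkAlgHom_rel K (HRel.bee1 (K := K))
theorem rel_epsal : gen K .eps * gen K .al = 0 := by
  simpa [gen] using RingQuot.mkAlgHom_rel K (HRel.epsal (K := K))
theorem rel_beeps : gen K .be * gen K .eps = 0 := by
  simpa [gen] using RingQuot.mkAlgHom_rel K (HRel.beeps (K := K))
theorem rel_abab : gen K .al * (gen K .be * (gen K .al * gen K .be)) = gen K .eps * gen K .eps := by
  simpa [gen, mul_assoc] using RingQuot.mkAlgHom_rel K (HRel.abab (K := K))
theorem rel_e1be : gen K .e1 * gen K .be = 0 := by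
  rw [← rel_e2be, ← mul_assoc, rel_e1e2, zero_mul]
theorem rel_e2al : gen K .e2 * gen K .al = 0 := by
  rw [← rel_e1al, ← mul_assoc, rel_e2e1, zero_mul]
theorem rel_e2eps : gen K .e2 * gen K .eps = 0 := by
  rw [← rel_e1eps, ← mul_assoc, rel_e2e1, zero_mul]
theorem rel_alal : gen K .al * gen K .al = 0 := by
  rw [← rel_ale2, mul_assoc, rel_ale2, rel_e2al, mul_zero]
theorem rel_aleps : gen K .al * gen K .eps = 0 := by
  rw [← rel_ale2, mul_assoc, rel_e2eps, mul_zero]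
theorem rel_ale1 : gen K .al * gen K .e1 = 0 := by
  rw [← rel_ale2, mul_assoc, rel_e2e1, mul_zero]
theorem rel_bebe : gen K .be * gen K .be = 0 := by
  rw [← rel_bee1, mul_assoc, rel_bee1, rel_e1be, mul_zero]
theorem rel_epsbe : gen K .eps * gen K .be = 0 := by
  rw [← rel_epse1, mul_assoc, rel_e1be, mul_zero]
theorem rel_bee2 : gen K .be * gen K .e2 = 0 := by
  rw [← rel_bee1, mul_assoc, rel_e1e2, mul_zero]
theorem rel_epse2 : gen K .eps * gen K .e2 = 0 := by
  rw [← rel_epse1, mul_assoc, rel_e1e2, mul_zero]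
theorem rel_beeps' (x : HA K) : gen K .be * (gen K .eps * x) = 0 := by
  rw [← mul_assoc, rel_beeps, zero_mul]
theorem rel_epseps' : gen K .eps * (gen K .eps * gen K .eps) = 0 := by
  rw [← rel_abab, ← mul_assoc, rel_epsal, zero_mul]

/-- The embedding `e₁A → A`. -/
noncomputable def sec1fun (x : Fin 6 → K) : HA K :=
  x 0 • gen K .e1 + x 1 • gen K .eps + x 2 • (gen K .eps * gen K .eps) + x 3 • gen K .al +
    x 4 • (gen K .al * gen K .be) + x 5 • (gen K .al * (gen K .be * gen K .al))

/-- The embedding `e₂A → A`. -/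
noncomputable def sec2fun (x : Fin 5 → K) : HA K :=
  x 0 • gen K .e2 + x 1 • gen K .be + x 2 • (gen K .be * gen K .al) +
    x 3 • (gen K .be * (gen K .al * gen K .be)) +
    x 4 • (gen K .be * (gen K .al * (gen K .be * gen K .al)))

theorem sec1fun_gen (g : HGen) (x : Fin 6 → K) :
    sec1fun K (act1 K g x) = sec1fun K x * gen K g := by
  cases g <;> simp [sec1fun, act1_e1, act1_e2, act1_eps, act1_al, act1_be, add_mul, mul_assoc,
    rel_e1e1, rel_e2e2, rel_e1e2, rel_e2e1, rel_e1eps, rel_epse1, rel_e1al, rel_ale2, rel_e2be,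
    rel_bee1, rel_epsal, rel_beeps, rel_abab, rel_e1be, rel_e2al, rel_e2eps, rel_alal, rel_aleps,
    rel_ale1, rel_bebe, rel_epsbe, rel_bee2, rel_epse2, rel_beeps', rel_epseps']
  abel

theorem sec2fun_gen (g : HGen) (x : Fin 5 → K) :
    sec2fun K (act2 K g x) = sec2fun K x * gen K g := by
  cases g <;> simp [sec2fun, act2_e1, act2_e2, act2_eps, act2_al, act2_be, add_mul, mul_assoc,
    rel_e1e1, rel_e2e2, rel_e1e2, rel_e2e1, rel_e1eps, rel_epse1, rel_e1al, rel_ale2, rel_e2be,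
    rel_bee1, rel_epsal, rel_beeps, rel_abab, rel_e1be, rel_e2al, rel_e2eps, rel_alal, rel_aleps,
    rel_ale1, rel_bebe, rel_epsbe, rel_bee2, rel_epse2, rel_beeps', rel_epseps']

theorem sec1fun_smul (c : K) (x : Fin 6 → K) : sec1fun K (c • x) = c • sec1fun K x := by
  simp [sec1fun, smul_smul]

theorem sec2fun_smul (c : K) (x : Fin 5 → K) : sec2fun K (c • x) = c • sec2fun K x := by
  simp [sec2fun, smul_smul]

theorem smul_op_algebraMap (c : K) (x : HA K) :
    op (algebraMap K (HA K) c) • (op x : (HA K)ᵐᵒᵖ) = op (c • x) := by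
  rw [smul_eq_mul, ← op_mul, Algebra.smul_def, Algebra.commutes]

/-- The embedding `e₁A → A`. -/
noncomputable def sec1 : RMod (rho1 K) →ₗ[(HA K)ᵐᵒᵖ] (HA K)ᵐᵒᵖ :=
  let f : RMod (rho1 K) →+ (HA K)ᵐᵒᵖ :=
    { toFun := fun x => op (sec1fun K x)
      map_zero' := by
        change op (sec1fun K 0) = 0
        simp [sec1fun]
      map_add' := by
        intro (x : Fin 6 → K) (y : Fin 6 → K)
        change op (sec1fun K (x + y)) = op (sec1fun K x) + op (sec1fun K y)
        rw [← op_add]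
        congr 1
        simp only [sec1fun, Pi.add_apply, add_smul]
        abel }
  { f with
    map_smul' := linear_of_gens K f (by
        intro c m
        rw [RMod_smul_K]
        exact (congrArg op (sec1fun_smul K c m)).trans (smul_op_algebraMap K c _).symm) (by
        intro g (m : Fin 6 → K)
        change op (sec1fun K (rho1 K (op (gen K g)) m)) = op (gen K g) * op (sec1fun K m)
        rw [rho1_gen, sec1fun_gen, op_mul]) }

/-- The embedding `e₂A → A`. -/
noncomputable def sec2 : RMod (rho2 K) →ₗ[(HA K)ᵐᵒᵖ] (HA K)ᵐᵒᵖ :=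
  let f : RMod (rho2 K) →+ (HA K)ᵐᵒᵖ :=
    { toFun := fun x => op (sec2fun K x)
      map_zero' := by
        change op (sec2fun K 0) = 0
        simp [sec2fun]
      map_add' := by
        intro (x : Fin 5 → K) (y : Fin 5 → K)
        change op (sec2fun K (x + y)) = op (sec2fun K x) + op (sec2fun K y)
        rw [← op_add]
        congr 1
        simp only [sec2fun, Pi.add_apply, add_smul]
        abel }
  { f with
    map_smul' := linear_of_gens K f (by
        intro c m
        rw [RMod_smul_K]
        exact (congrArg op (sec2fun_smul K c m)).trans (smul_op_algebraMap K c _).symm) (by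
        intro g (m : Fin 5 → K)
        change op (sec2fun K (rho2 K (op (gen K g)) m)) = op (gen K g) * op (sec2fun K m)
        rw [rho2_gen, sec2fun_gen, op_mul]) }

instance proj1 : Module.Projective (HA K)ᵐᵒᵖ (RMod (rho1 K)) :=
  Module.Projective.of_split (sec1 K)
    (LinearMap.toSpanSingleton (HA K)ᵐᵒᵖ (RMod (rho1 K)) (![1, 0, 0, 0, 0, 0] : Fin 6 → K)) (by
      refine LinearMap.ext fun (x : Fin 6 → K) => ?_
      change rho1 K (op (sec1fun K x)) ![1, 0, 0, 0, 0, 0] = x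
      simp only [sec1fun, op_add, op_smul, op_mul, map_add, map_smul, map_mul, rho1_gen,
        LinearMap.add_apply, LinearMap.smul_apply, Module.End.mul_apply,
        act1_e1, act1_e2, act1_eps, act1_al, act1_be]
      ext i
      fin_cases i <;> simp)

instance proj2 : Module.Projective (HA K)ᵐᵒᵖ (RMod (rho2 K)) :=
  Module.Projective.of_split (sec2 K)
    (LinearMap.toSpanSingleton (HA K)ᵐᵒᵖ (RMod (rho2 K)) (![1, 0, 0, 0, 0] : Fin 5 → K)) (by
      refine LinearMap.ext fun (x : Fin 5 → K) => ?_
      change rho2 K (op (sec2fun K x)) ![1, 0, 0, 0, 0] = x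
      simp only [sec2fun, op_add, op_smul, op_mul, map_add, map_smul, map_mul, rho2_gen,
        LinearMap.add_apply, LinearMap.smul_apply, Module.End.mul_apply,
        act2_e1, act2_e2, act2_eps, act2_al, act2_be]
      ext i
      fin_cases i <;> simp)


theorem m_al_baba (y : RMod (rho2 K)) : lal K (lbaba K y) = 0 := by
  funext i; fin_cases i <;> rfl
theorem m_baba_be (y : RMod (rho1 K)) : lbaba K (lbe K y) = 0 := by
  funext i; fin_cases i <;> rfl
theorem m_be_eps (y : RMod (rho1 K)) : lbe K (leps K y) = 0 := by
  funext i; fin_cases i <;> rfl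
theorem m_eps_al (y : RMod (rho2 K)) : leps K (lal K y) = 0 := by
  funext i; fin_cases i <;> rfl
theorem m_al_bab (y : RMod (rho1 K)) : lal K (lbab K y) = leps K (leps K y) := by
  funext i; fin_cases i <;> rfl
theorem m_bab_eps (y : RMod (rho1 K)) : lbab K (leps K y) = 0 := by
  funext i; fin_cases i <;> rfl
theorem m_bab_al (y : RMod (rho2 K)) : lbab K (lal K y) = lbaba K y := by
  funext i; fin_cases i <;> rfl
theorem m_be_aba (y : RMod (rho2 K)) : lbe K (laba K y) = lbaba K y := by
  funext i; fin_cases i <;> rfl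
theorem m_aba_be (y : RMod (rho1 K)) : laba K (lbe K y) = leps K (leps K y) := by
  funext i; fin_cases i <;> rfl
theorem m_ab_al (y : RMod (rho2 K)) : lab K (lal K y) = laba K y := by
  funext i; fin_cases i <;> rfl
theorem m_eps_aba (y : RMod (rho2 K)) : leps K (laba K y) = 0 := by
  funext i; fin_cases i <;> rfl
theorem m_be_ab (y : RMod (rho1 K)) : lbe K (lab K y) = lbab K y := by
  funext i; fin_cases i <;> rfl
theorem m_eps_ab (y : RMod (rho1 K)) : leps K (lab K y) = 0 := by
  funext i; fin_cases i <;> rfl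
theorem m_ab_eps (y : RMod (rho1 K)) : lab K (leps K y) = 0 := by
  funext i; fin_cases i <;> rfl

theorem x_al (y : RMod (rho2 K)) (h : lal K y = 0) : ∃ z, lbaba K z = y := by
  have hi : ∀ i : Fin 6, (![0, 0, y 3, y 0, y 1, y 2] : Fin 6 → K) i = 0 := fun i => congrFun h i
  have h2 := hi 2
  have h3 := hi 3
  have h4 := hi 4
  have h5 := hi 5
  simp at h2 h3 h4 h5
  refine ⟨(![y 4, 0, 0, 0, 0] : Fin 5 → K), ?_⟩
  change (![0, 0, 0, 0, y 4] : Fin 5 → K) = y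
  funext i
  fin_cases i <;> simp [h2, h3, h4, h5]
theorem x_baba (y : RMod (rho2 K)) (h : lbaba K y = 0) : ∃ z, lbe K z = y := by
  have hi : ∀ i : Fin 5, (![0, 0, 0, 0, y 0] : Fin 5 → K) i = 0 := fun i => congrFun h i
  have h4 := hi 4
  simp at h4
  refine ⟨(![y 1, 0, 0, y 2, y 3, y 4] : Fin 6 → K), ?_⟩
  change (![0, y 1, y 2, y 3, y 4] : Fin 5 → K) = y
  funext i
  fin_cases i <;> simp [h4]
theorem x_be (y : RMod (rho1 K)) (h : lbe K y = 0) : ∃ z, leps K z = y := by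
  have hi : ∀ i : Fin 5, (![0, y 0, y 3, y 4, y 5] : Fin 5 → K) i = 0 := fun i => congrFun h i
  have h1 := hi 1
  have h2 := hi 2
  have h3 := hi 3
  have h4 := hi 4
  simp at h1 h2 h3 h4
  refine ⟨(![y 1, y 2, 0, 0, 0, 0] : Fin 6 → K), ?_⟩
  change (![0, y 1, y 2, 0, 0, 0] : Fin 6 → K) = y
  funext i
  fin_cases i <;> simp [h1, h2, h3, h4]
theorem x_eps (y : RMod (rho1 K)) (h : leps K y = 0) : ∃ z, lal K z = y := by
  have hi : ∀ i : Fin 6, (![0, y 0, y 1, 0, 0, 0] : Fin 6 → K) i = 0 := fun i => congrFun h i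
  have h1 := hi 1
  have h2 := hi 2
  simp at h1 h2
  refine ⟨(![y 3, y 4, y 5, y 2, 0] : Fin 5 → K), ?_⟩
  change (![0, 0, y 2, y 3, y 4, y 5] : Fin 6 → K) = y
  funext i
  fin_cases i <;> simp [h1, h2]
theorem x_top (y : RMod (rho1 K)) (h : (y : Fin 6 → K) 0 = 0) :
    ∃ z w, lal K z + leps K w = y := by
  refine ⟨(![y 3, y 4, y 5, y 2, 0] : Fin 5 → K), (![y 1, 0, 0, 0, 0, 0] : Fin 6 → K), ?_⟩
  change (![0, 0, y 2, y 3, y 4, y 5] + ![0, y 1, 0, 0, 0, 0] : Fin 6 → K) = y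
  funext i
  fin_cases i <;> simp [h]
theorem x_one (y : RMod (rho2 K)) (x : RMod (rho1 K)) (h : lal K y + leps K x = 0) :
    ∃ a b c, lbaba K a - lbab K c = y ∧ lal K b + leps K c = x := by
  have hi : ∀ i : Fin 6, (![0, 0, y 3, y 0, y 1, y 2] + ![0, x 0, x 1, 0, 0, 0] : Fin 6 → K) i = 0 :=
    fun i => congrFun h i
  have h1 := hi 1
  have h2 := hi 2
  have h3 := hi 3
  have h4 := hi 4
  have h5 := hi 5
  simp at h1 h2 h3 h4 h5
  have h2' : -x 1 = y 3 := by linear_combination -h2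
  refine ⟨(![y 4, 0, 0, 0, 0] : Fin 5 → K), (![x 3, x 4, x 5, x 2, 0] : Fin 5 → K),
    (![x 1, 0, 0, 0, 0, 0] : Fin 6 → K), ?_, ?_⟩
  · change (![0, 0, 0, 0, y 4] - ![0, 0, 0, x 1, 0] : Fin 5 → K) = y
    funext i
    fin_cases i <;> simp [h1, h2', h3, h4, h5]
  · change (![0, 0, x 2, x 3, x 4, x 5] + ![0, x 1, 0, 0, 0, 0] : Fin 6 → K) = x
    funext i
    fin_cases i <;> simp [h1]


open CategoryTheory

set_option linter.unusedVariables false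

/-- The terms of the periodic resolution of `N = e₁A/αA`. -/
noncomputable def NN : ℕ → ModuleCat.{0} (HA K)ᵐᵒᵖ
  | 0 => ModuleCat.of _ (RMod (rho1 K))
  | 1 => ModuleCat.of _ (RMod (rho2 K))
  | 2 => ModuleCat.of _ (RMod (rho2 K))
  | 3 => ModuleCat.of _ (RMod (rho1 K))
  | n + 4 => NN n

/-- The differential of the periodic resolution of `N`. -/
noncomputable def dN : ∀ n, NN K (n + 1) ⟶ NN K n
  | 0 => ModuleCat.ofHom (lal K)
  | 1 => ModuleCat.ofHom (lbaba K)
  | 2 => ModuleCat.ofHom (lbe K)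
  | 3 => ModuleCat.ofHom (leps K)
  | n + 4 => dN n

/-- First perturbation. -/
noncomputable def d1 : NN K 0 ⟶ NN K 0 := ModuleCat.ofHom (leps K)

/-- Second perturbation. -/
noncomputable def d2 : ∀ n, NN K n ⟶ NN K (n + 1)
  | 0 => ModuleCat.ofHom (-lbab K)
  | 1 => 𝟙 (ModuleCat.of _ (RMod (rho2 K)))
  | 2 => ModuleCat.ofHom (-laba K)
  | 3 => ModuleCat.ofHom (leps K)
  | n + 4 => d2 n

/-- Fourth perturbation. -/
noncomputable def d4 : ∀ n, NN K n ⟶ NN K (n + 3)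
  | 0 => ModuleCat.ofHom (lab K)
  | 1 => 0
  | 2 => 0
  | 3 => 0
  | n + 4 => d4 n

theorem c_11 (x : RMod (rho1 K)) : lal K (-lbab K x) + leps K (leps K x) = 0 := by
  rw [map_neg, m_al_bab, neg_add_cancel]
theorem c_21 (x : RMod (rho1 K)) : -lbab K (leps K x) = 0 := by
  rw [m_bab_eps, neg_zero]
theorem c_02a (x : RMod (rho2 K)) : lbaba K x + -lbab K (lal K x) = 0 := by
  rw [m_bab_al, add_neg_cancel]
theorem c_02b (x : RMod (rho2 K)) : lbe K (-laba K x) + lbaba K x = 0 := by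
  rw [map_neg, m_be_aba, neg_add_cancel]
theorem c_02c (x : RMod (rho1 K)) : leps K (leps K x) + -laba K (lbe K x) = 0 := by
  rw [m_aba_be, add_neg_cancel]
theorem c_22 (x : RMod (rho1 K)) : lbe K (lab K x) + -lbab K x = 0 := by
  rw [m_be_ab, add_neg_cancel]
theorem c_04a (x : RMod (rho2 K)) : leps K 0 + -laba K x + lab K (lal K x) = 0 := by
  rw [m_ab_al, map_zero, zero_add, neg_add_cancel]
theorem c_04b (x : RMod (rho2 K)) : lal K 0 + leps K (-laba K x) + 0 = 0 := by
  rw [map_neg, m_eps_aba, map_zero, zero_add, neg_zero, zero_add]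
theorem c_04c (x : RMod (rho1 K)) : lbaba K 0 + -lbab K (leps K x) + 0 = 0 := by
  rw [m_bab_eps, map_zero, zero_add, neg_zero, zero_add]
theorem c_04d (x : RMod (rho1 K)) : lbe K (lab K x) + -lbab K x + 0 = 0 := by
  rw [m_be_ab, add_neg_cancel, zero_add]

theorem i_dd : ∀ n (x : NN K (n + 2)), (dN K n).hom ((dN K (n + 1)).hom x) = 0
  | 0, x => m_al_baba K x
  | 1, x => m_baba_be K x
  | 2, x => m_be_eps K x
  | 3, x => m_eps_al K x
  | n + 4, x => i_dd n x

theorem i_11 (x : NN K 0) : (dN K 0).hom ((d2 K 0).hom x) + (d1 K).hom ((d1 K).hom x) = 0 :=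
  c_11 K x

theorem i_10 (x : NN K 1) : (d1 K).hom ((dN K 0).hom x) = 0 := m_eps_al K x

theorem i_21 (x : NN K 0) : (d2 K 0).hom ((d1 K).hom x) = 0 := c_21 K x

theorem i_41 (x : NN K 0) : (d4 K 0).hom ((d1 K).hom x) = 0 := m_ab_eps K x

theorem i_02 : ∀ n (x : NN K (n + 1)),
    (dN K (n + 1)).hom ((d2 K (n + 1)).hom x) + (d2 K n).hom ((dN K n).hom x) = 0
  | 0, x => c_02a K x
  | 1, x => c_02b K x
  | 2, x => c_02c K x
  | 3, x => c_11 K x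
  | n + 4, x => i_02 n x

theorem i_22 (x : NN K 0) :
    (dN K 2).hom ((d4 K 0).hom x) + (d2 K 1).hom ((d2 K 0).hom x) = 0 := c_22 K x

theorem i_04 : ∀ n (x : NN K (n + 1)), (dN K (n + 3)).hom ((d4 K (n + 1)).hom x) +
    (d2 K (n + 2)).hom ((d2 K (n + 1)).hom x) + (d4 K n).hom ((dN K n).hom x) = 0
  | 0, x => c_04a K x
  | 1, x => c_04b K x
  | 2, x => c_04c K x
  | 3, x => c_04d K x
  | n + 4, x => i_04 n x

theorem i_24 : ∀ n (x : NN K n), (d2 K (n + 3)).hom ((d4 K n).hom x) = 0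
  | 0, x => m_eps_ab K x
  | 1, x => map_zero (d2 K 4).hom
  | 2, x => map_zero (d2 K 5).hom
  | 3, x => map_zero (d2 K 6).hom
  | n + 4, x => i_24 n x

theorem i_42 : ∀ n (x : NN K n), (d4 K (n + 1)).hom ((d2 K n).hom x) = 0
  | 0, x => rfl
  | 1, x => rfl
  | 2, x => rfl
  | 3, x => m_ab_eps K x
  | n + 4, x => i_42 n x

theorem i_44 : ∀ n (x : NN K n), (d4 K (n + 3)).hom ((d4 K n).hom x) = 0
  | 0, x => rfl
  | 1, x => map_zero (d4 K 4).hom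
  | 2, x => map_zero (d4 K 5).hom
  | 3, x => map_zero (d4 K 6).hom
  | n + 4, x => i_44 n x

theorem i_ex : ∀ n (x : NN K (n + 1)), (dN K n).hom x = 0 → ∃ y, (dN K (n + 1)).hom y = x
  | 0, x, h => x_al K x h
  | 1, x, h => x_baba K x h
  | 2, x, h => x_be K x h
  | 3, x, h => x_eps K x h
  | n + 4, x, h => i_ex n x h

theorem i_proj : ∀ n, Module.Projective (HA K)ᵐᵒᵖ (NN K n)
  | 0 => proj1 K
  | 1 => proj2 K
  | 2 => proj2 K
  | 3 => proj1 K
  | n + 4 => i_proj n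

/-- The terms of the resolution of `S₁`. -/
noncomputable def PP : ℕ → ModuleCat.{0} (HA K)ᵐᵒᵖ
  | 0 => NN K 0
  | n + 1 => ModuleCat.of _ (NN K (n + 1) × PP n)

/-- Projection to the leading term. -/
noncomputable def pr : ∀ n, PP K n ⟶ NN K n
  | 0 => 𝟙 (NN K 0)
  | n + 1 => ModuleCat.ofHom (LinearMap.fst _ (NN K (n + 1)) (PP K n))

/-- Projection to the other terms. -/
noncomputable def sn (n : ℕ) : PP K (n + 1) ⟶ PP K n :=
  ModuleCat.ofHom (LinearMap.snd _ (NN K (n + 1)) (PP K n))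

/-- The twisting map. -/
noncomputable def ph : ∀ n, PP K n ⟶ NN K n
  | 0 => d1 K
  | 1 => sn K 0 ≫ d2 K 0
  | 2 => sn K 1 ≫ pr K 1 ≫ d2 K 1
  | n + 3 => sn K (n + 2) ≫ pr K (n + 2) ≫ d2 K (n + 2) +
      sn K (n + 2) ≫ sn K (n + 1) ≫ sn K n ≫ pr K n ≫ d4 K n

/-- The differential of the resolution of `S₁`. -/
noncomputable def DD : ∀ n, PP K (n + 1) ⟶ PP K n
  | 0 => pr K 1 ≫ dN K 0 + sn K 0 ≫ ph K 0
  | n + 1 => ModuleCat.ofHom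
      ((pr K (n + 2) ≫ dN K (n + 1) + sn K (n + 1) ≫ ph K (n + 1)).hom.prod
        (sn K (n + 1) ≫ DD n).hom)

theorem pr_DD : ∀ n (y : PP K (n + 1)), (pr K n).hom ((DD K n).hom y) =
    (dN K n).hom ((pr K (n + 1)).hom y) + (ph K n).hom ((sn K n).hom y)
  | 0, y => rfl
  | n + 1, y => rfl

theorem sn_DD (n) (y : PP K (n + 2)) : (sn K n).hom ((DD K (n + 1)).hom y) =
    (DD K n).hom ((sn K (n + 1)).hom y) := rfl

theorem ph_three (n) (y : PP K (n + 3)) : (ph K (n + 3)).hom y =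
    (d2 K (n + 2)).hom ((pr K (n + 2)).hom ((sn K (n + 2)).hom y)) +
    (d4 K n).hom ((pr K n).hom ((sn K n).hom ((sn K (n + 1)).hom ((sn K (n + 2)).hom y)))) := rfl

theorem d4_ph : ∀ n (y : PP K n), (d4 K n).hom ((ph K n).hom y) = 0
  | 0, y => i_41 K y
  | 1, y => i_42 K 0 _
  | 2, y => i_42 K 1 _
  | n + 3, y => by
    rw [ph_three, map_add, i_42 K (n + 2), i_44, add_zero]

theorem d2_ph : ∀ n (y : PP K (n + 2)), (d2 K (n + 2)).hom ((ph K (n + 2)).hom y) =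
    (d2 K (n + 2)).hom ((d2 K (n + 1)).hom ((pr K (n + 1)).hom ((sn K (n + 1)).hom y)))
  | 0, y => rfl
  | n + 1, y => by
    rw [ph_three, map_add, i_24, add_zero]

theorem ph_chain : ∀ n (y : PP K (n + 1)),
    (dN K n).hom ((ph K (n + 1)).hom y) + (ph K n).hom ((DD K n).hom y) = 0
  | 0, y => by
    change (dN K 0).hom ((d2 K 0).hom ((sn K 0).hom y)) +
      (d1 K).hom ((dN K 0).hom ((pr K 1).hom y) + (d1 K).hom ((sn K 0).hom y)) = 0
    rw [map_add, i_10]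
    exact (congrArg _ (zero_add _)).trans (i_11 K _)
  | 1, y => by
    change (dN K 1).hom ((d2 K 1).hom ((pr K 1).hom ((sn K 1).hom y))) +
      (d2 K 0).hom ((dN K 0).hom ((pr K 1).hom ((sn K 1).hom y)) +
        (d1 K).hom ((sn K 0).hom ((sn K 1).hom y))) = 0
    rw [map_add]
    exact (congrArg _ ((congrArg _ (i_21 K _)).trans (add_zero _))).trans (i_02 K 0 _)
  | 2, y => by
    change (dN K 2).hom ((d2 K 2).hom ((pr K 2).hom ((sn K 2).hom y)) +
        (d4 K 0).hom ((pr K 0).hom ((sn K 0).hom ((sn K 1).hom ((sn K 2).hom y))))) +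
      (d2 K 1).hom ((dN K 1).hom ((pr K 2).hom ((sn K 2).hom y)) +
        (d2 K 0).hom ((sn K 0).hom ((sn K 1).hom ((sn K 2).hom y)))) = 0
    rw [map_add, map_add]
    have h1 := i_02 K 1 ((pr K 2).hom ((sn K 2).hom y))
    have h2 := i_22 K ((sn K 0).hom ((sn K 1).hom ((sn K 2).hom y)))
    rw [add_add_add_comm, h1, zero_add]
    exact h2
  | n + 3, y => by
    rw [ph_three K n, ph_three K (n + 1), sn_DD, sn_DD, sn_DD, pr_DD, pr_DD]
    simp only [map_add]
    rw [d4_ph, d2_ph]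
    have h1 := i_02 K (n + 2) ((pr K (n + 3)).hom ((sn K (n + 3)).hom y))
    have h2 := i_04 K n ((pr K (n + 1)).hom ((sn K (n + 1)).hom ((sn K (n + 2)).hom
      ((sn K (n + 3)).hom y))))
    rw [add_zero]
    have := congrArg₂ (· + ·) h1 h2
    simp only [add_zero] at this
    rw [← this]
    abel

theorem PP_ext (n) (x y : PP K (n + 1)) (h : (pr K (n + 1)).hom x = (pr K (n + 1)).hom y)
    (h' : (sn K n).hom x = (sn K n).hom y) : x = y := Prod.ext h h'

theorem DD_DD : ∀ n (y : PP K (n + 2)), (DD K n).hom ((DD K (n + 1)).hom y) = 0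
  | 0, y => by
    change (dN K 0).hom ((pr K 1).hom ((DD K 1).hom y)) + (ph K 0).hom ((sn K 0).hom ((DD K 1).hom y)) = 0
    rw [pr_DD, sn_DD, map_add, i_dd, zero_add, ph_chain]
  | n + 1, y => by
    apply PP_ext
    · rw [pr_DD, pr_DD, sn_DD, map_add, i_dd, zero_add, ph_chain, map_zero]
    · rw [sn_DD, sn_DD, DD_DD n, map_zero]

theorem DD_ex : ∀ n (x : PP K (n + 1)), (DD K n).hom x = 0 → ∃ y, (DD K (n + 1)).hom y = x
  | 0, x, h => by
    obtain ⟨a, b, c, h1, h2⟩ := x_one K ((pr K 1).hom x) ((sn K 0).hom x) h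
    refine ⟨(a, ((b, c) : NN K 1 × PP K 0)), ?_⟩
    apply PP_ext
    · rw [← h1, sub_eq_add_neg]
      rfl
    · exact h2
  | n + 1, x, h => by
    have e1 := congrArg (sn K n).hom h
    rw [sn_DD, map_zero] at e1
    obtain ⟨y, hy⟩ := DD_ex n _ e1
    have e2 := congrArg (pr K (n + 1)).hom h
    rw [pr_DD, map_zero] at e2
    obtain ⟨z, hz⟩ := i_ex K (n + 1) ((pr K (n + 2)).hom x - (ph K (n + 2)).hom y) (by
      rw [map_sub, sub_eq_zero]
      have := ph_chain K (n + 1) y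
      rw [hy] at this
      exact add_right_cancel (e2.trans this.symm))
    refine ⟨((z, y) : NN K (n + 3) × PP K (n + 2)), ?_⟩
    apply PP_ext
    · change (dN K (n + 2)).hom z + (ph K (n + 2)).hom y = _
      rw [hz, sub_add_cancel]
    · exact hy

theorem PP_proj : ∀ n, Module.Projective (HA K)ᵐᵒᵖ (PP K n)
  | 0 => i_proj K 0
  | n + 1 => by
    have := i_proj K (n + 1)
    have := PP_proj n
    change Module.Projective (HA K)ᵐᵒᵖ (NN K (n + 1) × PP K n)
    infer_instance



theorem phi1_gen (g : HGen) : phi1 K (gen K g) = match g with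
    | HGen.e1 => (1 : K) | _ => 0 := by
  cases g <;> simp [phi1, gen]

theorem S_smul (a : HA K) (s : SMod K 0) : (op a • s : SMod K 0) = (phi1 K a * (show K from s) : K) :=
  rfl

theorem S_smul_K (c : K) (s : SMod K 0) :
    (op (algebraMap K (HA K) c) • s : SMod K 0) = (c * (show K from s) : K) := by
  rw [S_smul, AlgHom.commutes]
  rfl

/-- The augmentation. -/
noncomputable def aug : RMod (rho1 K) →ₗ[(HA K)ᵐᵒᵖ] SMod K 0 where
  toFun v := (show Fin 6 → K from v) 0
  map_add' _ _ := rfl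
  map_smul' b v := linear_of_gens K (M := RMod (rho1 K)) (M' := SMod K 0)
    { toFun := fun v => (show Fin 6 → K from v) 0, map_zero' := rfl, map_add' := fun _ _ => rfl }
    (fun c m => by
      rw [RMod_smul_K, S_smul_K]
      rfl)
    (fun g m => by
      rw [RMod_smul', rho1_gen, S_smul, phi1_gen]
      cases g
      · exact (one_mul (M := K) _).symm
      all_goals exact (zero_mul (M₀ := K) _).symm) b v

/-- The generator of `e₁A`. -/
def u1 : RMod (rho1 K) := (![1, 0, 0, 0, 0, 0] : Fin 6 → K)

theorem f_gen (M : Type) [AddCommGroup M] [Module (HA K)ᵐᵒᵖ M] (f : M →ₗ[(HA K)ᵐᵒᵖ] SMod K 0)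
    (g : HGen) (hg : g ≠ HGen.e1) (m : M) : f (op (gen K g) • m) = 0 := by
  rw [map_smul, S_smul, phi1_gen]
  cases g
  · exact absurd rfl hg
  all_goals exact zero_mul (M₀ := K) _

theorem s1_gen (g : HGen) (x : RMod (rho1 K)) :
    (op (gen K g) • x : RMod (rho1 K)) = act1 K g (show Fin 6 → K from x) :=
  congrFun (congrArg DFunLike.coe (rho1_gen K g)) _

theorem s2_gen (g : HGen) (x : RMod (rho2 K)) :
    (op (gen K g) • x : RMod (rho2 K)) = act2 K g (show Fin 5 → K from x) :=
  congrFun (congrArg DFunLike.coe (rho2_gen K g)) _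

theorem dec1' (x : Fin 6 → K) : x = x 0 • (![1, 0, 0, 0, 0, 0] : Fin 6 → K) +
    ![0, x 1, x 2, 0, 0, 0] + ![0, 0, 0, x 3, 0, x 5] + ![0, 0, 0, 0, x 4, 0] := by
  funext i
  fin_cases i <;> simp

theorem dec1 (x : RMod (rho1 K)) : ∃ u v w : RMod (rho1 K),
    x = op (algebraMap K (HA K) ((show Fin 6 → K from x) 0)) • u1 K + op (gen K .eps) • u +
      op (gen K .al) • v + op (gen K .be) • w := by
  refine ⟨(![x 1, x 2, 0, 0, 0, 0] : Fin 6 → K), (![x 3, 0, 0, 0, x 5, 0] : Fin 6 → K),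
    (![0, 0, 0, x 4, 0, 0] : Fin 6 → K), ?_⟩
  refine Eq.trans ?_ (congrArg₂ _ (congrArg₂ _ (congrArg₂ _ (RMod_smul_K (rho1 K) _ _).symm
    (s1_gen K .eps _).symm) (s1_gen K .al _).symm) (s1_gen K .be _).symm)
  exact dec1' K x

theorem dec2 (x : RMod (rho2 K)) : ∃ u v : RMod (rho2 K),
    x = op (gen K .e2) • u + op (gen K .be) • v := by
  refine ⟨x, (![x 1, 0, x 3, 0, 0] : Fin 5 → K), ?_⟩
  refine Eq.trans ?_ (congrArg₂ _ (s2_gen K .e2 _).symm (s2_gen K .be _).symm)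
  change x = (![x 0, 0, x 2, 0, x 4] + ![0, x 1, 0, x 3, 0] : Fin 5 → K)
  funext i
  fin_cases i <;> simp

theorem f1 (f : RMod (rho1 K) →ₗ[(HA K)ᵐᵒᵖ] SMod K 0) (x : RMod (rho1 K)) :
    f x = op (algebraMap K (HA K) ((show Fin 6 → K from x) 0)) • f (u1 K) := by
  obtain ⟨u, v, w, h⟩ := dec1 K x
  conv_lhs => rw [h]
  rw [map_add, map_add, map_add, f_gen K _ f _ (by simp), f_gen K _ f _ (by simp),
    f_gen K _ f _ (by simp), add_zero, add_zero, add_zero, map_smul]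

theorem f1z (f : RMod (rho1 K) →ₗ[(HA K)ᵐᵒᵖ] SMod K 0) (x : RMod (rho1 K))
    (h : (show Fin 6 → K from x) 0 = 0) : f x = 0 := by
  rw [f1, h, map_zero, op_zero, zero_smul]

theorem f2 (f : RMod (rho2 K) →ₗ[(HA K)ᵐᵒᵖ] SMod K 0) (x : RMod (rho2 K)) : f x = 0 := by
  obtain ⟨u, v, h⟩ := dec2 K x
  rw [h, map_add, f_gen K _ f _ (by simp), f_gen K _ f _ (by simp), add_zero]

/-- The simple module `S₁`. -/
noncomputable abbrev SS : ModuleCat.{0} (HA K)ᵐᵒᵖ := ModuleCat.of (HA K)ᵐᵒᵖ (SMod K 0)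

theorem k_dN : ∀ n (f : NN K n ⟶ SS K) (x : NN K (n + 1)), f.hom ((dN K n).hom x) = 0
  | 0, f, x => f1z K f.hom _ rfl
  | 1, f, x => f2 K f.hom _
  | 2, f, x => f2 K f.hom _
  | 3, f, x => f1z K f.hom _ rfl
  | n + 4, f, x => k_dN n f x

theorem k_d1 (f : NN K 0 ⟶ SS K) (x : NN K 0) : f.hom ((d1 K).hom x) = 0 := f1z K f.hom _ rfl

theorem k_d2 : ∀ n (f : NN K (n + 1) ⟶ SS K) (x : NN K n), f.hom ((d2 K n).hom x) = 0
  | 0, f, x => f2 K f.hom _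
  | 1, f, x => f2 K f.hom _
  | 2, f, x => f1z K f.hom _ (neg_zero (G := K))
  | 3, f, x => f1z K f.hom _ rfl
  | n + 4, f, x => k_d2 n f x

theorem k_d4 : ∀ n (f : NN K (n + 3) ⟶ SS K) (x : NN K n), f.hom ((d4 K n).hom x) = 0
  | 0, f, x => f1z K f.hom _ rfl
  | 1, f, x => map_zero f.hom
  | 2, f, x => map_zero f.hom
  | 3, f, x => map_zero f.hom
  | n + 4, f, x => k_d4 n f x

theorem k_ph : ∀ n (f : NN K n ⟶ SS K) (y : PP K n), f.hom ((ph K n).hom y) = 0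
  | 0, f, y => k_d1 K f _
  | 1, f, y => k_d2 K 0 f _
  | 2, f, y => k_d2 K 1 f _
  | n + 3, f, y => by
    rw [ph_three, map_add, k_d2 K (n + 2), k_d4 K n, add_zero]

/-- First inclusion. -/
noncomputable def in1 (n : ℕ) : NN K (n + 1) ⟶ PP K (n + 1) :=
  ModuleCat.ofHom (LinearMap.inl _ (NN K (n + 1)) (PP K n))

/-- Second inclusion. -/
noncomputable def in2 (n : ℕ) : PP K n ⟶ PP K (n + 1) :=
  ModuleCat.ofHom (LinearMap.inr _ (NN K (n + 1)) (PP K n))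

theorem in_sum (n) (y : PP K (n + 1)) :
    (in1 K n).hom ((pr K (n + 1)).hom y) + (in2 K n).hom ((sn K n).hom y) = y :=
  Prod.ext (add_zero _) (zero_add _)

theorem k_DD : ∀ n (f : PP K n ⟶ SS K) (y : PP K (n + 1)), f.hom ((DD K n).hom y) = 0
  | 0, f, y => by
    refine (map_add f.hom ((dN K 0).hom ((pr K 1).hom y)) ((ph K 0).hom ((sn K 0).hom y))).trans ?_
    exact (congrArg₂ _ (k_dN K 0 f _) (k_ph K 0 f _)).trans (add_zero _)
  | n + 1, f, y => by
    rw [← in_sum K n ((DD K (n + 1)).hom y), pr_DD, sn_DD, map_add, map_add, map_add]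
    have h1 := k_dN K (n + 1) (in1 K n ≫ f) ((pr K (n + 2)).hom y)
    have h2 := k_ph K (n + 1) (in1 K n ≫ f) ((sn K (n + 1)).hom y)
    have h3 := k_DD n (in2 K n ≫ f) ((sn K (n + 1)).hom y)
    rw [ModuleCat.hom_comp, LinearMap.comp_apply] at h1 h2 h3
    rw [h1, h2, h3, add_zero, add_zero]

theorem DD_zero_comp (n : ℕ) (f : PP K n ⟶ SS K) : DD K n ≫ f = 0 := by
  ext y
  exact k_DD K n f y

theorem aug_ex (x : PP K 0) (h : aug K x = 0) : ∃ y, (DD K 0).hom y = x := by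
  obtain ⟨z, w, e⟩ := x_top K x h
  exact ⟨((z, w) : NN K 1 × PP K 0), e⟩

theorem aug_surj : Function.Surjective (aug K) := fun s =>
  ⟨(![s, 0, 0, 0, 0, 0] : Fin 6 → K), rfl⟩


/-- The complex resolving `S₁`. -/
noncomputable def CC : ChainComplex (ModuleCat.{0} (HA K)ᵐᵒᵖ) ℕ :=
  ChainComplex.of (PP K) (DD K) (fun n => by
    ext y
    exact DD_DD K n y)

theorem CC_d (n : ℕ) : (CC K).d (n + 1) n = DD K n := ChainComplex.of_d _ _ _

theorem CC_exact (n : ℕ) : (CC K).ExactAt (n + 1) := by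
  rw [HomologicalComplex.exactAt_iff' _ (n + 1 + 1) (n + 1) n (by simp) (by simp)]
  rw [ShortComplex.moduleCat_exact_iff]
  intro x hx
  have hx' : (DD K n).hom x = 0 := by
    rw [← CC_d]
    exact hx
  obtain ⟨y, hy⟩ := DD_ex K n x hx'
  refine ⟨y, ?_⟩
  rw [← hy, ← CC_d]
  rfl

/-- The augmentation as a morphism. -/
noncomputable def augC : (CC K).X 0 ⟶ SS K := ModuleCat.ofHom (aug K)

theorem augC_d : (CC K).d 1 0 ≫ augC K = 0 := by
  rw [CC_d K 0]
  exact DD_zero_comp K 0 _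

instance : Epi (augC K) := (ModuleCat.epi_iff_surjective _).2 (aug_surj K)

theorem augC_exact : (ShortComplex.mk _ _ (augC_d K)).Exact := by
  rw [ShortComplex.moduleCat_exact_iff]
  intro x hx
  obtain ⟨y, hy⟩ := aug_ex K x hx
  refine ⟨y, ?_⟩
  rw [← hy, ← CC_d]
  rfl

/-- The projective resolution of `S₁`. -/
noncomputable def res : ProjectiveResolution (SS K) where
  complex := CC K
  projective n := by
    have := PP_proj K n
    exact (PP K n).projective_of_categoryTheory_projective
  π := (ChainComplex.toSingle₀Equiv _ _).symm ⟨augC K, augC_d K⟩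
  quasiIso := ⟨fun n => by
    cases n
    · rw [ChainComplex.quasiIsoAt₀_iff, ShortComplex.quasiIso_iff_of_zeros']
      · refine (ShortComplex.exact_and_epi_g_iff_of_iso ?_).2
          ⟨augC_exact K, by dsimp; infer_instance⟩
        refine ShortComplex.isoMk (Iso.refl _) (Iso.refl _) (Iso.refl _) ?_ ?_
        · refine (Category.id_comp _).trans (Category.comp_id _).symm
        · refine (Category.id_comp _).trans (Eq.trans ?_ (Category.comp_id _).symm)
          simp
          rfl
      all_goals rfl
    · rw [quasiIsoAt_iff_exactAt']
      · apply CC_exact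
      · apply ChainComplex.exactAt_succ_single_obj⟩

theorem res_d (n : ℕ) (f : (res K).complex.X n ⟶ SS K) :
    (res K).complex.d (n + 1) n ≫ f = 0 := by
  change (CC K).d (n + 1) n ≫ f = 0
  rw [CC_d]
  exact DD_zero_comp K n f


theorem hom_K_apply {M : ModuleCat.{0} (HA K)ᵐᵒᵖ} (c : K) (f : M ⟶ SS K) (m : M) :
    (c • f).hom m = (op (algebraMap K (HA K) c) • f.hom m : SMod K 0) := rfl

theorem fin1 : Module.finrank K (ModuleCat.of (HA K)ᵐᵒᵖ (RMod (rho1 K)) ⟶ SS K) = 1 := by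
  rw [finrank_eq_one_iff']
  refine ⟨ModuleCat.ofHom (aug K), ?_, ?_⟩
  · intro h
    have h1 : aug K (u1 K) = 0 := congrArg (fun f => f.hom (u1 K)) h
    exact one_ne_zero (α := K) h1
  · intro w
    refine ⟨(show K from w.hom (u1 K)), ?_⟩
    ext x
    refine (hom_K_apply K _ _ x).trans ?_
    refine Eq.trans ?_ (f1 K w.hom x).symm
    rw [S_smul_K, S_smul_K]
    exact mul_comm (G := K) _ _

theorem fin2 : Subsingleton (ModuleCat.of (HA K)ᵐᵒᵖ (RMod (rho2 K)) ⟶ SS K) := by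
  constructor
  intro f g
  ext x
  exact (f2 K f.hom x).trans (f2 K g.hom x).symm

/-- Dimension of `Hom(N_n, S₁)`. -/
def cN : ℕ → ℕ
  | 0 => 1
  | 1 => 0
  | 2 => 0
  | 3 => 1
  | n + 4 => cN n

/-- Dimension of `Hom(P_n, S₁)`. -/
def cP : ℕ → ℕ
  | 0 => 1
  | n + 1 => cN (n + 1) + cP n

theorem fin1' : Module.Finite K (ModuleCat.of (HA K)ᵐᵒᵖ (RMod (rho1 K)) ⟶ SS K) :=
  Module.finite_of_finrank_pos (by rw [fin1]; exact one_pos)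

theorem fin2' : Module.Finite K (ModuleCat.of (HA K)ᵐᵒᵖ (RMod (rho2 K)) ⟶ SS K) ∧
    Module.finrank K (ModuleCat.of (HA K)ᵐᵒᵖ (RMod (rho2 K)) ⟶ SS K) = 0 := by
  have := fin2 K
  exact ⟨inferInstance, Module.finrank_zero_of_subsingleton⟩

theorem finN : ∀ n, Module.Finite K (NN K n ⟶ SS K) ∧ Module.finrank K (NN K n ⟶ SS K) = cN n
  | 0 => ⟨fin1' K, fin1 K⟩
  | 1 => fin2' K
  | 2 => fin2' K
  | 3 => ⟨fin1' K, fin1 K⟩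
  | n + 4 => finN n

/-- Splitting of homs out of `P_{n+1}`. -/
noncomputable def splitHom (n : ℕ) :
    (PP K (n + 1) ⟶ SS K) ≃ₗ[K] (NN K (n + 1) ⟶ SS K) × (PP K n ⟶ SS K) where
  toFun f := (in1 K n ≫ f, in2 K n ≫ f)
  invFun p := pr K (n + 1) ≫ p.1 + sn K n ≫ p.2
  map_add' f g := by simp
  map_smul' c f := by simp
  left_inv f := by
    ext y
    exact (map_add f.hom _ _).symm.trans (congrArg f.hom (in_sum K n y))
  right_inv p := by
    refine Prod.ext ?_ ?_
    · ext x
      exact (congrArg _ (map_zero p.2.hom)).trans (add_zero _)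
    · ext x
      exact (congrArg (· + _) (map_zero p.1.hom)).trans (zero_add _)

theorem finP : ∀ n, Module.Finite K (PP K n ⟶ SS K) ∧ Module.finrank K (PP K n ⟶ SS K) = cP n
  | 0 => finN K 0
  | n + 1 => by
    obtain ⟨h1, h2⟩ := finN K (n + 1)
    obtain ⟨h3, h4⟩ := finP n
    refine ⟨Module.Finite.equiv (splitHom K n).symm, ?_⟩
    rw [(splitHom K n).finrank_eq, Module.finrank_prod, h2, h4]
    rfl

theorem cN_four (k : ℕ) : cN (4 * k) = 1 ∧ cN (4 * k + 1) = 0 ∧ cN (4 * k + 2) = 0 ∧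
    cN (4 * k + 3) = 1 := by
  induction k with
  | zero => exact ⟨rfl, rfl, rfl, rfl⟩
  | succ k ih => exact ih

theorem cP_four (k : ℕ) : cP (4 * k) = 2 * k + 1 ∧ cP (4 * k + 1) = 2 * k + 1 ∧
    cP (4 * k + 2) = 2 * k + 1 ∧ cP (4 * k + 3) = 2 * k + 2 := by
  have h0 : cP (4 * k) = 2 * k + 1 := by
    induction k with
    | zero => rfl
    | succ k ih =>
      have a0 : cP (4 * (k + 1)) = cN (4 * (k + 1)) + cP (4 * k + 3) := rfl
      have a1 : cP (4 * k + 1) = cN (4 * k + 1) + cP (4 * k) := rfl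
      have a2 : cP (4 * k + 2) = cN (4 * k + 2) + cP (4 * k + 1) := rfl
      have a3 : cP (4 * k + 3) = cN (4 * k + 3) + cP (4 * k + 2) := rfl
      obtain ⟨-, h1, h2, h3⟩ := cN_four k
      have h4 := (cN_four (k + 1)).1
      rw [a0, a3, a2, a1, h4, h3, h2, h1, ih]
      ring
  have a1 : cP (4 * k + 1) = cN (4 * k + 1) + cP (4 * k) := rfl
  have a2 : cP (4 * k + 2) = cN (4 * k + 2) + cP (4 * k + 1) := rfl
  have a3 : cP (4 * k + 3) = cN (4 * k + 3) + cP (4 * k + 2) := rfl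
  obtain ⟨-, h1, h2, h3⟩ := cN_four k
  rw [a3, a2, a1, h3, h2, h1, h0]
  refine ⟨rfl, ?_, ?_, ?_⟩ <;> ring

/-- A short complex with zero maps. -/
noncomputable def homIso {C : Type*} [Category C] [Limits.HasZeroMorphisms C] (S : ShortComplex C)
    [S.HasHomology] (hf : S.f = 0) (hg : S.g = 0) : S.homology ≅ S.X₂ :=
  (ShortComplex.HomologyData.ofZeros S hf hg).left.homologyIso

theorem lin_d (i j : ℕ) : ((res K).complex.linearYonedaObj K (SS K)).d i j = 0 := by
  by_cases h : i + 1 = j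
  · subst h
    ext f
    exact res_d K i f
  · exact HomologicalComplex.shape _ _ _ h

theorem extDim_eq (n : ℕ) : extDim K 0 0 n = cP n := by
  have e := ((res K).isoExt (R := K) n (SS K) ≪≫
    homIso (((res K).complex.linearYonedaObj K (SS K)).sc n) (lin_d K _ _) (lin_d K _ _))
  exact e.toLinearEquiv.finrank_eq.trans (finP K n).2

end Aux

/-- For every `k ≥ 0` and `l ∈ {0,1,2,3}`, `dim_K Ext^{4k+l}_A(S₁, S₁)` equals `2k+1` if
`l ∈ {0,1,2}` and `2k+2` if `l = 3`. -/
theorem ext_s1_s1_dim (k l : ℕ) (hl : l ≤ 3) :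
    ((l = 0 ∨ l = 1 ∨ l = 2) → extDim K 0 0 (4 * k + l) = 2 * k + 1) ∧
    (l = 3 → extDim K 0 0 (4 * k + l) = 2 * k + 2) := by
  obtain ⟨h0, h1, h2, h3⟩ := cP_four k
  rw [extDim_eq]
  constructor
  · rintro (rfl | rfl | rfl)
    · exact h0
    · exact h1
    · exact h2
  · rintro rfl
    exact h3
end

section
/- For every integer n ≥ 0, the K-vector space Ext^n_A(S₂, S₂) has dimension 1 if n ≡ 0 or 3 (mod 4), and dimension 0 if n ≡ 1 or 2 (mod 4). -/
/-!
Formalization of a statement from "On the Hochschild cohomology of tame Hecke algebras"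
by K. Erdmann and S. Schroll.

`HA K` is the special biserial algebra `A = KQ/I` (the basic algebra of the Hecke algebra
`H_q(S_4)` at `q = -1`), presented by generators `e₁, e₂, ε, α, β` and the relations listed in
`HRel`.
-/

set_option synthInstance.maxHeartbeats 1000000
set_option maxHeartbeats 1000000

open scoped TensorProduct

variable (K : Type) [Field K]

section Gen
open CategoryTheory

/-- The left module `R f`, for an idempotent `f`. -/
def Pm {R : Type} [Ring R] (f : R) : Submodule R R where
  carrier := {x | x * f = x}
  add_mem' {a b} ha hb := by
    simp only [Set.mem_ofPred_eq] at *
    rw [add_mul, ha, hb]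
  zero_mem' := by simp
  smul_mem' c x hx := by
    simp only [Set.mem_ofPred_eq, smul_eq_mul] at *
    rw [mul_assoc, hx]

theorem mem_Pm {R : Type} [Ring R] {f x : R} : x ∈ Pm f ↔ x * f = x := Iff.rfl

theorem Pm_projective {R : Type} [Ring R] (f : R) (hf : f * f = f) :
    Module.Projective R (Pm f) := by
  refine Module.Projective.of_split (M := R) (Pm f).subtype
    ((LinearMap.toSpanSingleton R R f).codRestrict (Pm f) (fun x => ?_)) ?_
  · rw [mem_Pm, LinearMap.toSpanSingleton_apply, smul_eq_mul, mul_assoc, hf]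
  · ext x
    exact x.2

/-- Right multiplication by `b` as a map `R f → R g`. -/
def Pd {R : Type} [Ring R] (f g b : R) (h : b * g = b) : Pm f →ₗ[R] Pm g :=
  ((LinearMap.toSpanSingleton R R b).comp (Pm f).subtype).codRestrict (Pm g) (fun x => by
    rw [mem_Pm, LinearMap.comp_apply, LinearMap.toSpanSingleton_apply, smul_eq_mul, mul_assoc, h])

theorem Pd_apply {R : Type} [Ring R] (f g b : R) (h : b * g = b) (x : Pm f) :
    (Pd f g b h x : R) = x * b := rfl

/-- The augmentation. -/
def Pa {R : Type} [Ring R] (f : R) {S : Type} [AddCommGroup S] [Module R S] (s : S) :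
    Pm f →ₗ[R] S :=
  (LinearMap.toSpanSingleton R S s).comp (Pm f).subtype

theorem Pa_apply {R : Type} [Ring R] (f : R) {S : Type} [AddCommGroup S] [Module R S] (s : S)
    (x : Pm f) : Pa f s x = (x : R) • s := rfl

/-- The complex. -/
noncomputable def Pcx {R : Type} [Ring R] (f b : ℕ → R)
    (hbf : ∀ n, b n * f n = b n) (hbb : ∀ n, b (n+1) * b n = 0) :
    ChainComplex (ModuleCat.{0} R) ℕ :=
  ChainComplex.of (fun n => ModuleCat.of R (Pm (f n)))
    (fun n => ModuleCat.ofHom (Pd (f (n+1)) (f n) (b n) (hbf n)))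
    (fun n => by
      ext (x : Pm (f (n+1+1)))
      change ((x : R) * b (n+1)) * b n = 0
      rw [mul_assoc, hbb, mul_zero])

theorem Pcx_d {R : Type} [Ring R] (f b : ℕ → R)
    (hbf : ∀ n, b n * f n = b n) (hbb : ∀ n, b (n+1) * b n = 0) (n : ℕ) :
    (Pcx f b hbf hbb).d (n+1) n = ModuleCat.ofHom (Pd (f (n+1)) (f n) (b n) (hbf n)) := by
  exact ChainComplex.of_d (V := ModuleCat.{0} R) (X := fun n => ModuleCat.of R (Pm (f n)))
    (fun n => ModuleCat.ofHom (Pd (f (n+1)) (f n) (b n) (hbf n))) n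

/-- The resolution. -/
noncomputable def Pres {R : Type} [Ring R] (f b : ℕ → R)
    (hbf : ∀ n, b n * f n = b n) (hbb : ∀ n, b (n+1) * b n = 0)
    (hff : ∀ n, f n * f n = f n) (hfb : ∀ n, f (n+1) * b n = b n)
    {S : Type} [AddCommGroup S] [Module R S] (s : S)
    (ex : ∀ n x, x * f (n+1) = x → x * b n = 0 → ∃ y, y * b (n+1) = x)
    (ex0 : ∀ x, x * f 0 = x → x • s = 0 → ∃ y, y * b 0 = x)
    (hbs : b 0 • s = 0) (hfs : f 0 • s = s) (surj : ∀ t : S, ∃ x : R, x • s = t) :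
    ProjectiveResolution (ModuleCat.of R S) where
  complex := Pcx f b hbf hbb
  projective n := by
    have := Pm_projective (f n) (hff n)
    exact (IsProjective.iff_projective (R := R) (P := Pm (f n))).1 this
  π := (ChainComplex.toSingle₀Equiv _ _).symm ⟨ModuleCat.ofHom (Pa (f 0) s), by
      rw [Pcx_d]
      ext (x : Pm (f (0+1)))
      change ((x : R) * b 0) • s = 0
      rw [mul_smul, hbs, smul_zero]⟩
  quasiIso := ⟨fun n => by
    cases n with
    | zero =>
      rw [ChainComplex.quasiIsoAt₀_iff, ShortComplex.quasiIso_iff_of_zeros']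
      · have key : (ShortComplex.mk (ModuleCat.ofHom (Pd (f (0+1)) (f 0) (b 0) (hbf 0)))
            (ModuleCat.ofHom (Pa (f 0) s)) (by
              ext x
              change ((x : R) * b 0) • s = 0
              rw [mul_smul, hbs, smul_zero])).Exact ∧ Epi (ModuleCat.ofHom (Pa (f 0) s)) := by
          constructor
          · rw [ShortComplex.moduleCat_exact_iff]
            intro x hx
            obtain ⟨y, hy⟩ := ex0 x.1 x.2 hx
            refine ⟨⟨y * f (0+1), ?_⟩, ?_⟩
            · rw [mem_Pm, mul_assoc, hff]
            · apply Subtype.ext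
              change y * f (0+1) * b 0 = x.1
              rw [mul_assoc, hfb, hy]
          · rw [ModuleCat.epi_iff_surjective]
            intro t
            obtain ⟨x, hx⟩ := surj t
            refine ⟨⟨x * f 0, ?_⟩, ?_⟩
            · rw [mem_Pm, mul_assoc, hff]
            · change (x * f 0) • s = t
              rw [mul_smul, hfs, hx]
        refine (ShortComplex.exact_and_epi_g_iff_of_iso ?_).2 key
        refine ShortComplex.isoMk (Iso.refl _) (Iso.refl _) (Iso.refl _) ?_ ?_
        · simp
          exact (Pcx_d f b hbf hbb 0).symm
        · simp
          rfl
      all_goals rfl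
    | succ n =>
      rw [quasiIsoAt_iff_exactAt']
      · rw [HomologicalComplex.exactAt_iff' _ (n + 1 + 1) (n + 1) n (by simp) (by simp)]
        rw [ShortComplex.moduleCat_exact_iff]
        intro x hx
        have hx' : (x.1 : R) * b n = 0 := by
          have h2 : (Pcx f b hbf hbb).d (n+1) n x = 0 := hx
          rw [Pcx_d] at h2
          exact congrArg Subtype.val h2
        obtain ⟨y, hy⟩ := ex n x.1 x.2 hx'
        refine ⟨⟨y * f (n+1+1), ?_⟩, ?_⟩
        · rw [mem_Pm, mul_assoc, hff]
        · change (Pcx f b hbf hbb).d (n+1+1) (n+1) _ = _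
          rw [Pcx_d]
          apply Subtype.ext
          change y * f (n+1+1) * b (n+1) = x.1
          rw [mul_assoc, hfb, hy]
      · apply ChainComplex.exactAt_succ_single_obj⟩

theorem Pm_hom_apply {R : Type} [Ring R] {f : R} (hff : f * f = f)
    {S : Type} [AddCommGroup S] [Module R S] (φ : Pm f →ₗ[R] S) (x : Pm f) :
    φ x = (x : R) • φ ⟨f, hff⟩ := by
  rw [← map_smul]
  congr 1
  apply Subtype.ext
  exact x.2.symm

theorem Pext {k : Type} [Field k] {R : Type} [Ring R] [Algebra k R] (f b : ℕ → R)
    (hbf : ∀ n, b n * f n = b n) (hbb : ∀ n, b (n+1) * b n = 0)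
    (hff : ∀ n, f n * f n = f n) (hfb : ∀ n, f (n+1) * b n = b n)
    {S : Type} [AddCommGroup S] [Module R S] (s : S)
    (ex : ∀ n x, x * f (n+1) = x → x * b n = 0 → ∃ y, y * b (n+1) = x)
    (ex0 : ∀ x, x * f 0 = x → x • s = 0 → ∃ y, y * b 0 = x)
    (hbs : b 0 • s = 0) (hfs : f 0 • s = s) (surj : ∀ t : S, ∃ x : R, x • s = t)
    (hbS : ∀ n (t : S), b n • t = 0) (n : ℕ) :
    Nonempty (((((Ext k (ModuleCat R) n).obj (Opposite.op (ModuleCat.of R S))).obj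
      (ModuleCat.of R S)) : ModuleCat k) ≃ₗ[k]
        (ModuleCat.of R (Pm (f n)) ⟶ ModuleCat.of R S)) := by
  let P := Pres f b hbf hbb hff hfb s ex ex0 hbs hfs surj
  have hd : ∀ n, (P.complex.linearYonedaObj k (ModuleCat.of R S)).d n (n+1) = 0 := by
    intro n
    ext (φ : ModuleCat.of R (Pm (f n)) ⟶ ModuleCat.of R S)
    change (Pcx f b hbf hbb).d (n+1) n ≫ φ = 0
    rw [Pcx_d]
    ext (x : Pm (f (n+1)))
    change φ.hom (Pd (f (n+1)) (f n) (b n) (hbf n) x) = 0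
    rw [Pm_hom_apply (hff n) φ.hom, Pd_apply, mul_smul, hbS, smul_zero]
  have hd' : ∀ i j, (P.complex.linearYonedaObj k (ModuleCat.of R S)).d i j = 0 := by
    intro i j
    by_cases h : i + 1 = j
    · subst h; exact hd i
    · exact HomologicalComplex.shape _ _ _ h
  let e1 := P.isoExt (R := k) n (ModuleCat.of R S)
  let e2 := (ShortComplex.HomologyData.ofZeros
    ((P.complex.linearYonedaObj k (ModuleCat.of R S)).sc n) (hd' _ _) (hd' _ _)).left.homologyIso
  exact ⟨(e1 ≪≫ e2).toLinearEquiv⟩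
end Gen

section Alg

theorem r_e1e1 : gE1 K * gE1 K = gE1 K := by
  simpa [gE1] using RingQuot.mkAlgHom_rel K (HRel.e1e1 (K := K))
theorem r_e2e2 : gE2 K * gE2 K = gE2 K := by
  simpa [gE2] using RingQuot.mkAlgHom_rel K (HRel.e2e2 (K := K))
theorem r_e1e2 : gE1 K * gE2 K = 0 := by
  simpa [gE1, gE2] using RingQuot.mkAlgHom_rel K (HRel.e1e2 (K := K))
theorem r_e2e1 : gE2 K * gE1 K = 0 := by
  simpa [gE1, gE2] using RingQuot.mkAlgHom_rel K (HRel.e2e1 (K := K))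
theorem r_sum : gE1 K + gE2 K = 1 := by
  simpa [gE1, gE2] using RingQuot.mkAlgHom_rel K (HRel.sum (K := K))
theorem r_e1eps : gE1 K * gEps K = gEps K := by
  simpa [gE1, gEps] using RingQuot.mkAlgHom_rel K (HRel.e1eps (K := K))
theorem r_epse1 : gEps K * gE1 K = gEps K := by
  simpa [gE1, gEps] using RingQuot.mkAlgHom_rel K (HRel.epse1 (K := K))
theorem r_e1al : gE1 K * gAl K = gAl K := by
  simpa [gE1, gAl] using RingQuot.mkAlgHom_rel K (HRel.e1al (K := K))
theorem r_ale2 : gAl K * gE2 K = gAl K := by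
  simpa [gE2, gAl] using RingQuot.mkAlgHom_rel K (HRel.ale2 (K := K))
theorem r_e2be : gE2 K * gBe K = gBe K := by
  simpa [gE2, gBe] using RingQuot.mkAlgHom_rel K (HRel.e2be (K := K))
theorem r_bee1 : gBe K * gE1 K = gBe K := by
  simpa [gE1, gBe] using RingQuot.mkAlgHom_rel K (HRel.bee1 (K := K))
theorem r_epsal : gEps K * gAl K = 0 := by
  simpa [gEps, gAl] using RingQuot.mkAlgHom_rel K (HRel.epsal (K := K))
theorem r_beeps : gBe K * gEps K = 0 := by
  simpa [gEps, gBe] using RingQuot.mkAlgHom_rel K (HRel.beeps (K := K))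
theorem r_abab : gAl K * (gBe K * (gAl K * gBe K)) = gEps K * gEps K := by
  simpa [gEps, gAl, gBe, mul_assoc] using RingQuot.mkAlgHom_rel K (HRel.abab (K := K))

theorem r_e1al' (z : HA K) : gE1 K * (gAl K * z) = gAl K * z := by rw [← mul_assoc, r_e1al]
theorem r_e2be' (z : HA K) : gE2 K * (gBe K * z) = gBe K * z := by rw [← mul_assoc, r_e2be]
theorem r_e1eps' (z : HA K) : gE1 K * (gEps K * z) = gEps K * z := by rw [← mul_assoc, r_e1eps]
theorem r_epsal' (z : HA K) : gEps K * (gAl K * z) = 0 := by rw [← mul_assoc, r_epsal, zero_mul]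
theorem r_beeps' (z : HA K) : gBe K * (gEps K * z) = 0 := by rw [← mul_assoc, r_beeps, zero_mul]
theorem r_epse2 : gEps K * gE2 K = 0 := by rw [← r_epse1, mul_assoc, r_e1e2, mul_zero]
theorem r_ale1 : gAl K * gE1 K = 0 := by rw [← r_ale2, mul_assoc, r_e2e1, mul_zero]
theorem r_bee2 : gBe K * gE2 K = 0 := by rw [← r_bee1, mul_assoc, r_e1e2, mul_zero]
theorem r_aleps : gAl K * gEps K = 0 := by
  rw [← r_e1eps, ← mul_assoc, r_ale1, zero_mul]
theorem r_alal : gAl K * gAl K = 0 := by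
  rw [← r_e1al, ← mul_assoc, mul_assoc (gE1 K), r_ale1, mul_zero, zero_mul]
theorem r_bebe : gBe K * gBe K = 0 := by
  rw [← r_e2be, ← mul_assoc, mul_assoc (gE2 K), r_bee2, mul_zero, zero_mul]
theorem r_epsbe : gEps K * gBe K = 0 := by
  rw [← r_e2be, ← mul_assoc, r_epse2, zero_mul]
theorem r_e1be : gE1 K * gBe K = 0 := by
  rw [← r_e2be, ← mul_assoc, r_e1e2, zero_mul]
theorem r_e2al : gE2 K * gAl K = 0 := by
  rw [← r_e1al, ← mul_assoc, r_e2e1, zero_mul]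
theorem r_e2eps : gE2 K * gEps K = 0 := by
  rw [← r_e1eps, ← mul_assoc, r_e2e1, zero_mul]
theorem r_eee : gEps K * (gEps K * gEps K) = 0 := by
  rw [← r_abab, ← mul_assoc, r_epsal, zero_mul]
theorem r_ababa : gAl K * (gBe K * (gAl K * (gBe K * gAl K))) = 0 := by
  have : gAl K * (gBe K * (gAl K * (gBe K * gAl K)))
    = (gAl K * (gBe K * (gAl K * gBe K))) * gAl K := by simp only [mul_assoc]
  rw [this, r_abab, mul_assoc, r_epsal, mul_zero]
theorem r_babab : gBe K * (gAl K * (gBe K * (gAl K * gBe K))) = 0 := by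
  rw [r_abab, ← mul_assoc, r_beeps, zero_mul]

/-- Submodule closure principle. -/
theorem span_closed (V : Submodule K (HA K))
    (h1 : ∀ z ∈ V, z * gE1 K ∈ V) (h2 : ∀ z ∈ V, z * gE2 K ∈ V) (h3 : ∀ z ∈ V, z * gEps K ∈ V)
    (h4 : ∀ z ∈ V, z * gAl K ∈ V) (h5 : ∀ z ∈ V, z * gBe K ∈ V) (x z : HA K) (hz : z ∈ V) :
    z * x ∈ V := by
  obtain ⟨y, rfl⟩ := RingQuot.mkAlgHom_surjective K (HRel K) x
  induction y using FreeAlgebra.induction generalizing z with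
  | grade0 r =>
    rw [AlgHom.commutes, ← Algebra.commutes, ← Algebra.smul_def]
    exact V.smul_mem r hz
  | grade1 g =>
    cases g
    · exact h1 z hz
    · exact h2 z hz
    · exact h3 z hz
    · exact h4 z hz
    · exact h5 z hz
  | mul a b ha hb =>
    rw [map_mul, ← mul_assoc]
    exact hb _ (ha _ hz)
  | add a b ha hb =>
    rw [map_add, mul_add]
    exact V.add_mem (ha _ hz) (hb _ hz)

theorem span_closed1 (s : Set (HA K)) (g : HA K)
    (h : ∀ z ∈ s, z * g ∈ Submodule.span K s) :
    ∀ z ∈ Submodule.span K s, z * g ∈ Submodule.span K s := by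
  have : Submodule.span K s ≤ (Submodule.span K s).comap (LinearMap.mulRight K g) :=
    Submodule.span_le.2 h
  exact this

theorem span2 (x : HA K) : ∃ a b c d e : K, gE2 K * x =
    a • gE2 K + b • gBe K + c • (gBe K * gAl K) + d • (gBe K * (gAl K * gBe K))
      + e • (gBe K * (gAl K * (gBe K * gAl K))) := by
  have key := span_closed K (Submodule.span K {gE2 K, gBe K, gBe K * gAl K,
    gBe K * (gAl K * gBe K), gBe K * (gAl K * (gBe K * gAl K))})
    (span_closed1 K _ _ ?_) (span_closed1 K _ _ ?_) (span_closed1 K _ _ ?_)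
    (span_closed1 K _ _ ?_) (span_closed1 K _ _ ?_) x (gE2 K) (Submodule.subset_span (by simp))
  · simp only [Submodule.mem_span_insert, Submodule.mem_span_singleton] at key
    obtain ⟨a, _, ⟨b, _, ⟨c, _, ⟨d, _, ⟨e, rfl⟩, rfl⟩, rfl⟩, rfl⟩, h⟩ := key
    exact ⟨a, b, c, d, e, by rw [h]; abel⟩
  all_goals
    rintro z (rfl | rfl | rfl | rfl | rfl)
    all_goals
      try simp only [mul_assoc, r_e2e1, r_e2e2, r_e2eps, r_e2al, r_e2be, r_bee1, r_bee2, r_beeps,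
        r_bebe, r_ale1, r_ale2, r_aleps, r_alal, r_babab, r_ababa, mul_zero]
      first
      | exact Submodule.zero_mem _
      | exact Submodule.subset_span (by simp)

theorem span1 (x : HA K) : ∃ a b c d e f : K, gE1 K * x =
    a • gE1 K + b • gEps K + c • gAl K + d • (gAl K * gBe K)
      + e • (gAl K * (gBe K * gAl K)) + f • (gEps K * gEps K) := by
  have key := span_closed K (Submodule.span K {gE1 K, gEps K, gAl K, gAl K * gBe K,
    gAl K * (gBe K * gAl K), gEps K * gEps K})
    (span_closed1 K _ _ ?_) (span_closed1 K _ _ ?_) (span_closed1 K _ _ ?_)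
    (span_closed1 K _ _ ?_) (span_closed1 K _ _ ?_) x (gE1 K) (Submodule.subset_span (by simp))
  · simp only [Submodule.mem_span_insert, Submodule.mem_span_singleton] at key
    obtain ⟨a, _, ⟨b, _, ⟨c, _, ⟨d, _, ⟨e, _, ⟨f, rfl⟩, rfl⟩, rfl⟩, rfl⟩, rfl⟩, h⟩ := key
    exact ⟨a, b, c, d, e, f, by rw [h]; abel⟩
  all_goals
    rintro z (rfl | rfl | rfl | rfl | rfl | rfl)
    all_goals
      try simp only [mul_assoc, r_e1e1, r_e1e2, r_e1eps, r_e1al, r_e1be, r_bee1, r_bee2, r_beeps,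
        r_bebe, r_ale1, r_ale2, r_aleps, r_alal, r_epse1, r_epse2, r_epsal, r_epsbe, r_eee,
        r_babab, r_ababa, r_abab, mul_zero]
      first
      | exact Submodule.zero_mem _
      | exact Submodule.subset_span (by simp)

/-- Integer matrices of the representation `P₂`. -/
def N2 : HGen → Matrix (Fin 5) (Fin 5) ℤ
  | .e1 => !![0,0,0,0,0; 0,1,0,0,0; 0,0,0,0,0; 0,0,0,1,0; 0,0,0,0,0]
  | .e2 => !![1,0,0,0,0; 0,0,0,0,0; 0,0,1,0,0; 0,0,0,0,0; 0,0,0,0,1]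
  | .eps => 0
  | .al => !![0,0,0,0,0; 0,0,1,0,0; 0,0,0,0,0; 0,0,0,0,1; 0,0,0,0,0]
  | .be => !![0,1,0,0,0; 0,0,0,0,0; 0,0,0,1,0; 0,0,0,0,0; 0,0,0,0,0]

/-- Integer matrices of the representation `P₁`. -/
def N1 : HGen → Matrix (Fin 6) (Fin 6) ℤ
  | .e1 => !![1,0,0,0,0,0; 0,1,0,0,0,0; 0,0,0,0,0,0; 0,0,0,1,0,0; 0,0,0,0,0,0; 0,0,0,0,0,1]
  | .e2 => !![0,0,0,0,0,0; 0,0,0,0,0,0; 0,0,1,0,0,0; 0,0,0,0,0,0; 0,0,0,0,1,0; 0,0,0,0,0,0]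
  | .eps => !![0,1,0,0,0,0; 0,0,0,0,0,1; 0,0,0,0,0,0; 0,0,0,0,0,0; 0,0,0,0,0,0; 0,0,0,0,0,0]
  | .al => !![0,0,1,0,0,0; 0,0,0,0,0,0; 0,0,0,0,0,0; 0,0,0,0,1,0; 0,0,0,0,0,0; 0,0,0,0,0,0]
  | .be => !![0,0,0,0,0,0; 0,0,0,0,0,0; 0,0,0,1,0,0; 0,0,0,0,0,0; 0,0,0,0,0,1; 0,0,0,0,0,0]

/-- The representation `P₂`. -/
def M2 : HA K →ₐ[K] Matrix (Fin 5) (Fin 5) K :=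
  RingQuot.liftAlgHom K ⟨FreeAlgebra.lift K (fun g => (Int.castRingHom K).mapMatrix (N2 g)), by
      rintro x y h
      induction h <;>
      · simp only [map_mul, map_add, map_one, map_zero, FreeAlgebra.lift_ι_apply]
        simp only [← map_mul, ← map_add]
        first
        | exact congrArg _ (by decide)
        | exact (congrArg _ (by decide)).trans (map_zero _)
        | exact (congrArg _ (by decide)).trans (map_one (Int.castRingHom K).mapMatrix)⟩

/-- The representation `P₁`. -/
def M1 : HA K →ₐ[K] Matrix (Fin 6) (Fin 6) K :=
  RingQuot.liftAlgHom K ⟨FreeAlgebra.lift K (fun g => (Int.castRingHom K).mapMatrix (N1 g)), by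
      rintro x y h
      induction h <;>
      · simp only [map_mul, map_add, map_one, map_zero, FreeAlgebra.lift_ι_apply]
        simp only [← map_mul, ← map_add]
        first
        | exact congrArg _ (by decide)
        | exact (congrArg _ (by decide)).trans (map_zero _)
        | exact (congrArg _ (by decide)).trans (map_one (Int.castRingHom K).mapMatrix)⟩

theorem M2_e2 : M2 K (gE2 K) = (Int.castRingHom K).mapMatrix (N2 .e2) := by simp [M2, gE2]
theorem M2_al : M2 K (gAl K) = (Int.castRingHom K).mapMatrix (N2 .al) := by simp [M2, gAl]
theorem M2_be : M2 K (gBe K) = (Int.castRingHom K).mapMatrix (N2 .be) := by simp [M2, gBe]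
theorem M1_e1 : M1 K (gE1 K) = (Int.castRingHom K).mapMatrix (N1 .e1) := by simp [M1, gE1]
theorem M1_eps : M1 K (gEps K) = (Int.castRingHom K).mapMatrix (N1 .eps) := by simp [M1, gEps]
theorem M1_al : M1 K (gAl K) = (Int.castRingHom K).mapMatrix (N1 .al) := by simp [M1, gAl]
theorem M1_be : M1 K (gBe K) = (Int.castRingHom K).mapMatrix (N1 .be) := by simp [M1, gBe]

theorem indep2 (a b c d e : K) (h : a • gE2 K + b • gBe K + c • (gBe K * gAl K)
      + d • (gBe K * (gAl K * gBe K)) + e • (gBe K * (gAl K * (gBe K * gAl K))) = 0) :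
    a = 0 ∧ b = 0 ∧ c = 0 ∧ d = 0 ∧ e = 0 := by
  have h' := congrArg (M2 K) h
  have n1 : N2 .be * N2 .al
    = !![0,0,1,0,0; 0,0,0,0,0; 0,0,0,0,1; 0,0,0,0,0; 0,0,0,0,0] := by decide
  have n2 : N2 .be * (N2 .al * N2 .be)
    = !![0,0,0,1,0; 0,0,0,0,0; 0,0,0,0,0; 0,0,0,0,0; 0,0,0,0,0] := by decide
  have n3 : N2 .be * (N2 .al * (N2 .be * N2 .al))
    = !![0,0,0,0,1; 0,0,0,0,0; 0,0,0,0,0; 0,0,0,0,0; 0,0,0,0,0] := by decide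
  simp only [map_add, map_smul, map_mul, M2_e2, M2_al, M2_be, map_zero] at h'
  simp only [← map_mul, n1, n2, n3] at h'
  have E := fun j => congrFun (congrFun h' 0) j
  refine ⟨?_, ?_, ?_, ?_, ?_⟩
  · simpa [N2] using E 0
  · simpa [N2] using E 1
  · simpa [N2] using E 2
  · simpa [N2] using E 3
  · simpa [N2] using E 4

theorem indep1 (a b c d e f : K) (h : a • gE1 K + b • gEps K + c • gAl K + d • (gAl K * gBe K)
      + e • (gAl K * (gBe K * gAl K)) + f • (gEps K * gEps K) = 0) :
    a = 0 ∧ b = 0 ∧ c = 0 ∧ d = 0 ∧ e = 0 ∧ f = 0 := by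
  have h' := congrArg (M1 K) h
  have n1 : N1 .al * N1 .be = !![0,0,0,1,0,0; 0,0,0,0,0,0; 0,0,0,0,0,0; 0,0,0,0,0,1;
    0,0,0,0,0,0; 0,0,0,0,0,0] := by decide
  have n2 : N1 .al * (N1 .be * N1 .al) = !![0,0,0,0,1,0; 0,0,0,0,0,0; 0,0,0,0,0,0; 0,0,0,0,0,0;
    0,0,0,0,0,0; 0,0,0,0,0,0] := by decide
  have n3 : N1 .eps * N1 .eps = !![0,0,0,0,0,1; 0,0,0,0,0,0; 0,0,0,0,0,0; 0,0,0,0,0,0;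
    0,0,0,0,0,0; 0,0,0,0,0,0] := by decide
  simp only [map_add, map_smul, map_mul, M1_e1, M1_eps, M1_al, M1_be, map_zero] at h'
  simp only [← map_mul, n1, n2, n3] at h'
  have E := fun j => congrFun (congrFun h' 0) j
  refine ⟨?_, ?_, ?_, ?_, ?_, ?_⟩
  · simpa [N1] using E 0
  · simpa [N1] using E 1
  · simpa [N1] using E 2
  · simpa [N1] using E 3
  · simpa [N1] using E 4
  · simpa [N1] using E 5

theorem ex_be (x : HA K) (hx : gE1 K * x = x) (h : gBe K * x = 0) : ∃ y, gEps K * y = x := by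
  obtain ⟨a, b, c, d, e, f, hh⟩ := span1 K x
  rw [hx] at hh
  subst hh
  simp only [mul_add, mul_smul_comm, r_bee1, r_beeps, r_beeps', smul_zero, add_zero] at h
  obtain ⟨-, rfl, rfl, rfl, rfl⟩ := indep2 K 0 a c d e (by rw [← h]; simp)
  refine ⟨b • gE1 K + f • gEps K, ?_⟩
  simp [mul_add, r_epse1]

theorem ex_eps (x : HA K) (hx : gE1 K * x = x) (h : gEps K * x = 0) : ∃ y, gAl K * y = x := by
  obtain ⟨a, b, c, d, e, f, hh⟩ := span1 K x
  rw [hx] at hh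
  subst hh
  simp only [mul_add, mul_smul_comm, r_epse1, r_epsal, r_epsal', r_eee, smul_zero, add_zero] at h
  obtain ⟨-, rfl, -, -, -, rfl⟩ := indep1 K 0 a 0 0 0 b (by rw [← h]; simp)
  refine ⟨c • gE2 K + d • gBe K + e • (gBe K * gAl K) + f • (gBe K * (gAl K * gBe K)), ?_⟩
  simp [mul_add, r_ale2, r_abab]

theorem ex_al (x : HA K) (hx : gE2 K * x = x) (h : gAl K * x = 0) :
    ∃ y, gBe K * (gAl K * (gBe K * gAl K)) * y = x := by
  obtain ⟨a, b, c, d, e, hh⟩ := span2 K x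
  rw [hx] at hh
  subst hh
  simp only [mul_add, mul_smul_comm, r_ale2, r_abab, r_ababa, smul_zero, add_zero] at h
  obtain ⟨-, -, rfl, rfl, rfl, rfl⟩ := indep1 K 0 0 a b c d (by rw [← h]; simp)
  refine ⟨e • gE2 K, ?_⟩
  simp [mul_assoc, r_ale2]

theorem ex_soc (x : HA K) (hx : gE2 K * x = x)
    (h : gBe K * (gAl K * (gBe K * gAl K)) * x = 0) : ∃ y, gBe K * y = x := by
  obtain ⟨a, b, c, d, e, hh⟩ := span2 K x
  rw [hx] at hh
  subst hh
  simp only [mul_add, mul_smul_comm, mul_assoc, r_ale2, r_abab, r_ababa, r_babab, r_beeps',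
    smul_zero, add_zero, mul_zero] at h
  obtain ⟨-, -, -, -, rfl⟩ := indep2 K 0 0 0 0 a (by rw [← h]; simp)
  refine ⟨b • gE1 K + c • gAl K + d • (gAl K * gBe K) + e • (gAl K * (gBe K * gAl K)), ?_⟩
  simp [mul_add, r_bee1]

theorem p_e1 : phi2 K (gE1 K) = 0 := by simp [phi2, gE1]
theorem p_e2 : phi2 K (gE2 K) = 1 := by simp [phi2, gE2]
theorem p_eps : phi2 K (gEps K) = 0 := by simp [phi2, gEps]
theorem p_al : phi2 K (gAl K) = 0 := by simp [phi2, gAl]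
theorem p_be : phi2 K (gBe K) = 0 := by simp [phi2, gBe]

theorem ex_aug (x : HA K) (hx : gE2 K * x = x) (h : phi2 K x = 0) : ∃ y, gBe K * y = x := by
  obtain ⟨a, b, c, d, e, hh⟩ := span2 K x
  rw [hx] at hh
  subst hh
  simp only [map_add, map_smul, map_mul, p_e2, p_be, p_al] at h
  obtain rfl : a = 0 := by simpa using h
  refine ⟨b • gE1 K + c • gAl K + d • (gAl K * gBe K) + e • (gAl K * (gBe K * gAl K)), ?_⟩
  simp [mul_add, r_bee1]

end Alg

section Fin
open CategoryTheory MulOpposite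

/-- View a scalar as an element of `S₂`. -/
def sIn (c : K) : SMod K 1 := c

/-- View an element of `S₂` as a scalar. -/
def sOut (c : SMod K 1) : K := c

theorem SMod_smul (x : (HA K)ᵐᵒᵖ) (s : SMod K 1) : x • s = sIn K (phi2 K x.unop * sOut K s) := rfl

/-- The periodic sequence of idempotents. -/
def fA (n : ℕ) : HA K := if n % 4 = 0 ∨ n % 4 = 3 then gE2 K else gE1 K

/-- The periodic sequence of differentials. -/
def bA (n : ℕ) : HA K :=
  if n % 4 = 0 then gBe K else if n % 4 = 1 then gEps K else if n % 4 = 2 then gAl K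
    else gBe K * (gAl K * (gBe K * gAl K))

theorem seq_cases (n : ℕ) :
    (fA K n = gE2 K ∧ fA K (n+1) = gE1 K ∧ bA K n = gBe K ∧ bA K (n+1) = gEps K) ∨
    (fA K n = gE1 K ∧ fA K (n+1) = gE1 K ∧ bA K n = gEps K ∧ bA K (n+1) = gAl K) ∨
    (fA K n = gE1 K ∧ fA K (n+1) = gE2 K ∧ bA K n = gAl K ∧
      bA K (n+1) = gBe K * (gAl K * (gBe K * gAl K))) ∨
    (fA K n = gE2 K ∧ fA K (n+1) = gE2 K ∧ bA K n = gBe K * (gAl K * (gBe K * gAl K)) ∧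
      bA K (n+1) = gBe K) := by
  have h4 : n % 4 < 4 := Nat.mod_lt _ (by norm_num)
  have h : (n+1) % 4 = (n % 4 + 1) % 4 := by omega
  generalize hm : n % 4 = m at *
  simp only [fA, bA, h, hm]
  interval_cases m <;> simp

theorem ext_equiv (n : ℕ) :
    Nonempty (((((Ext K (ModuleCat (HA K)ᵐᵒᵖ) n).obj
      (Opposite.op (ModuleCat.of (HA K)ᵐᵒᵖ (SMod K 1)))).obj
      (ModuleCat.of (HA K)ᵐᵒᵖ (SMod K 1))) : ModuleCat K) ≃ₗ[K]
        (ModuleCat.of (HA K)ᵐᵒᵖ (Pm (op (fA K n))) ⟶ ModuleCat.of (HA K)ᵐᵒᵖ (SMod K 1))) := by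
  have hphi : ∀ n, phi2 K (bA K n) = 0 := by
    intro n
    rcases seq_cases K n with ⟨-, -, h, -⟩ | ⟨-, -, h, -⟩ | ⟨-, -, h, -⟩ | ⟨-, -, h, -⟩ <;>
      simp [h, p_be, p_al, p_eps]
  have f0 : fA K 0 = gE2 K := by simp [fA]
  have b0 : bA K 0 = gBe K := by simp [bA]
  have hbS : ∀ n (t : SMod K 1), op (bA K n) • t = 0 := by
    intro n t
    rw [SMod_smul, unop_op, hphi]
    exact zero_mul (sOut K t)
  refine Pext (k := K) (fun n => op (fA K n)) (fun n => op (bA K n)) ?_ ?_ ?_ ?_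
    (sIn K 1) ?_ ?_ ?_ ?_ ?_ ?_ n
  · intro n
    rw [← op_mul]
    congr 1
    rcases seq_cases K n with ⟨h1, h2, h3, h4⟩ | ⟨h1, h2, h3, h4⟩ | ⟨h1, h2, h3, h4⟩ |
      ⟨h1, h2, h3, h4⟩ <;> simp only [h1, h3, r_e2be, r_e1eps, r_e1al, r_e2be']
  · intro n
    rw [← op_mul, ← op_zero]
    congr 1
    rcases seq_cases K n with ⟨h1, h2, h3, h4⟩ | ⟨h1, h2, h3, h4⟩ | ⟨h1, h2, h3, h4⟩ |
      ⟨h1, h2, h3, h4⟩ <;>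
      simp only [h3, h4, r_beeps, r_epsal, r_ababa, mul_assoc, r_abab, r_beeps']
  · intro n
    rw [← op_mul]
    congr 1
    rcases seq_cases K n with ⟨h1, h2, h3, h4⟩ | ⟨h1, h2, h3, h4⟩ | ⟨h1, h2, h3, h4⟩ |
      ⟨h1, h2, h3, h4⟩ <;> simp only [h1, r_e1e1, r_e2e2]
  · intro n
    rw [← op_mul]
    congr 1
    rcases seq_cases K n with ⟨h1, h2, h3, h4⟩ | ⟨h1, h2, h3, h4⟩ | ⟨h1, h2, h3, h4⟩ |
      ⟨h1, h2, h3, h4⟩ <;> simp only [h2, h3, r_bee1, r_epse1, r_ale2, mul_assoc]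
  · intro n x hx hb
    have hx' : fA K (n+1) * x.unop = x.unop := congrArg unop hx
    have hb' : bA K n * x.unop = 0 := congrArg unop hb
    suffices ∃ y, bA K (n+1) * y = x.unop by
      obtain ⟨y, hy⟩ := this
      exact ⟨op y, unop_injective hy⟩
    rcases seq_cases K n with ⟨h1, h2, h3, h4⟩ | ⟨h1, h2, h3, h4⟩ | ⟨h1, h2, h3, h4⟩ |
      ⟨h1, h2, h3, h4⟩ <;> rw [h2] at hx' <;> rw [h3] at hb' <;> rw [h4]
    · exact ex_be K _ hx' hb'
    · exact ex_eps K _ hx' hb'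
    · exact ex_al K _ hx' hb'
    · exact ex_soc K _ hx' hb'
  · intro x hx hs
    have hx' : fA K 0 * x.unop = x.unop := congrArg unop hx
    rw [SMod_smul] at hs
    rw [f0] at hx'
    obtain ⟨y, hy⟩ := ex_aug K _ hx' ((mul_one _).symm.trans hs)
    refine ⟨op y, unop_injective ?_⟩
    change bA K 0 * y = _
    rw [b0, hy]
  · exact hbS 0 _
  · rw [SMod_smul, unop_op, f0, p_e2]
    exact mul_one (1 : K)
  · intro t
    refine ⟨op (algebraMap K (HA K) (sOut K t)), ?_⟩
    rw [SMod_smul, unop_op, AlgHom.commutes]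
    exact mul_one (sOut K t)
  · exact hbS

end Fin

/-- For every `n ≥ 0`, `dim_K Ext^n_A(S₂, S₂)` is `1` if `n ≡ 0, 3 (mod 4)` and `0` if
`n ≡ 1, 2 (mod 4)`. -/
theorem ext_s2_s2_dim (n : ℕ) :
    ((n % 4 = 0 ∨ n % 4 = 3) → extDim K 1 1 n = 1) ∧
    ((n % 4 = 1 ∨ n % 4 = 2) → extDim K 1 1 n = 0) := by
  obtain ⟨E⟩ := ext_equiv K n
  unfold extDim
  rw [E.finrank_eq]
  constructor
  · intro hn
    have hf : fA K n = gE2 K := if_pos hn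
    rw [hf]
    have hff : MulOpposite.op (gE2 K) * MulOpposite.op (gE2 K) = MulOpposite.op (gE2 K) := by
      rw [← MulOpposite.op_mul, r_e2e2]
    refine finrank_eq_one
      (ModuleCat.ofHom (Pa (MulOpposite.op (gE2 K)) (sIn K 1))) ?_ ?_
    · intro h
      have h2 := congrArg (fun φ => φ.hom ⟨MulOpposite.op (gE2 K), hff⟩) h
      have h3 : phi2 K (gE2 K) * 1 = 0 := h2
      rw [p_e2, mul_one] at h3
      exact one_ne_zero h3
    · intro w
      refine ⟨sOut K (w.hom ⟨MulOpposite.op (gE2 K), hff⟩), ?_⟩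
      ext (x : Pm (MulOpposite.op (gE2 K)))
      have h1 := Pm_hom_apply hff w.hom x
      refine Eq.trans ?_ h1.symm
      rw [SMod_smul]
      generalize sOut K (w.hom ⟨MulOpposite.op (gE2 K), hff⟩) = c
      change phi2 K (algebraMap K (HA K) c) * (phi2 K x.1.unop * 1) = phi2 K x.1.unop * c
      rw [AlgHom.commutes, mul_one]
      exact mul_comm _ _
  · intro hn
    have hf : fA K n = gE1 K := if_neg (by omega)
    rw [hf]
    have hff : MulOpposite.op (gE1 K) * MulOpposite.op (gE1 K) = MulOpposite.op (gE1 K) := by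
      rw [← MulOpposite.op_mul, r_e1e1]
    have hz : ∀ w : ModuleCat.of (HA K)ᵐᵒᵖ (Pm (MulOpposite.op (gE1 K))) ⟶
        ModuleCat.of (HA K)ᵐᵒᵖ (SMod K 1), w = 0 := by
      intro w
      ext (x : Pm (MulOpposite.op (gE1 K)))
      have h0 : w.hom ⟨MulOpposite.op (gE1 K), hff⟩ = (0 : SMod K 1) := by
        have h1 := Pm_hom_apply hff w.hom ⟨MulOpposite.op (gE1 K), hff⟩
        refine h1.trans ?_
        rw [SMod_smul, MulOpposite.unop_op, p_e1]
        exact zero_mul (sOut K _)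
      have h1 := Pm_hom_apply hff w.hom x
      rw [h0, smul_zero] at h1
      exact h1
    have : Subsingleton (ModuleCat.of (HA K)ᵐᵒᵖ (Pm (MulOpposite.op (gE1 K))) ⟶
        ModuleCat.of (HA K)ᵐᵒᵖ (SMod K 1)) := ⟨fun a b => (hz a).trans (hz b).symm⟩
    exact Module.finrank_zero_of_subsingleton
end
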